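/- There is no primitive non-constant arithmetic progression of integers of the form $x_1^2, x_2^2, x_3^5, x_4^5$ (four terms, with exponent pattern $(2,2,5,5)$). -/

import Mathlib

open Polynomial NumberField Module

/-- If `(γ - r) ^ 5 = e` where `e` is not a fifth power in `ℚ`, then `γ` has degree five. -/
lemma minpoly_of_sub_pow_five {K : Type*} [Field K] [NumberField K] (γ : K) (r e : ℤ)
    (h : (γ - r) ^ 5 = e) (he : ∀ b : ℚ, b ^ 5 ≠ e) (hK : finrank ℚ K = 5) :
    minpoly ℚ γ = (X - C (r : ℚ)) ^ 5 - C (e : ℚ) := by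
  have hdeg : ((X - C (r : ℚ)) ^ 5 - C (e : ℚ)).natDegree = 5 := by
    rw [natDegree_sub_C, natDegree_pow, natDegree_X_sub_C]
  have hmon : ((X - C (r : ℚ)) ^ 5 - C (e : ℚ)).Monic := by
    refine ((monic_X_sub_C (r : ℚ)).pow 5).sub_of_left ?_
    refine lt_of_le_of_lt degree_C_le ?_
    rw [degree_pow, degree_X_sub_C]; norm_num
  have hint : IsIntegral ℚ γ := Algebra.IsIntegral.isIntegral γ
  have hd : (minpoly ℚ γ).natDegree = 5 := by
    have h1 : (minpoly ℚ γ).natDegree ∣ 5 := hK ▸ minpoly.degree_dvd hint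
    rcases (Nat.dvd_prime (by norm_num)).1 h1 with h2 | h2
    · obtain ⟨b, hb⟩ := minpoly.natDegree_eq_one_iff.1 h2
      refine absurd ?_ (he (b - r))
      apply (algebraMap ℚ K).injective
      have hb' : (b : K) = γ := hb
      simp only [map_pow, map_sub, eq_ratCast, Rat.cast_intCast]
      rw [hb', h]
    · exact h2
  refine (eq_of_monic_of_dvd_of_natDegree_le (minpoly.monic hint) hmon
    (minpoly.dvd ℚ γ ?_) (by rw [hd, hdeg])).symm
  simp [h]

/-- If `(γ - r) ^ 5 = e` where `e` is not a fifth power in `ℚ`, then `γ` has norm `r ^ 5 + e`. -/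
lemma norm_of_sub_pow_five {K : Type*} [Field K] [NumberField K] (γ : K) (r e : ℤ)
    (h : (γ - r) ^ 5 = e) (he : ∀ b : ℚ, b ^ 5 ≠ e) (hK : finrank ℚ K = 5) :
    Algebra.norm ℚ γ = r ^ 5 + e := by
  have hint : IsIntegral ℚ γ := Algebra.IsIntegral.isIntegral γ
  have hm := minpoly_of_sub_pow_five γ r e h he hK
  have hd : finrank ℚ (IntermediateField.adjoin ℚ {γ}) = 5 := by
    rw [IntermediateField.adjoin.finrank hint, hm, natDegree_sub_C, natDegree_pow,
      natDegree_X_sub_C]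
  have hone : finrank (IntermediateField.adjoin ℚ {γ}) K = 1 := by
    have := finrank_mul_finrank ℚ (IntermediateField.adjoin ℚ {γ}) K
    rw [hd, hK] at this
    omega
  rw [Algebra.norm_eq_norm_adjoin, hone, pow_one, ← IntermediateField.adjoin.powerBasis_gen hint,
    Algebra.PowerBasis.norm_gen_eq_coeff_zero_minpoly, IntermediateField.adjoin.powerBasis_dim,
    IntermediateField.adjoin.powerBasis_gen, IntermediateField.minpoly_gen, hm,
    natDegree_sub_C, natDegree_pow, natDegree_X_sub_C, coeff_zero_eq_eval_zero]
  simp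
  ring

lemma rat_pow_five_ne_two_pow {n : ℕ} (hn : ¬ 5 ∣ n) (b : ℚ) : b ^ 5 ≠ 2 ^ n := by
  intro h
  have h2 := congrArg (padicValRat 2) h
  rw [padicValRat.pow, padicValRat.pow, show padicValRat 2 (2 : ℚ) = 1 from
    padicValRat.self (by norm_num), mul_one] at h2
  omega

lemma absNorm_span_of_sub_pow_five {K : Type*} [Field K] [NumberField K] (γ : 𝓞 K) (r e : ℤ)
    (h : (γ - r) ^ 5 = e) (he : ∀ b : ℚ, b ^ 5 ≠ e) (hK : finrank ℚ K = 5) :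
    Ideal.absNorm (Ideal.span {γ}) = (r ^ 5 + e).natAbs := by
  rw [Ideal.absNorm_span_singleton]
  congr 1
  have h1 : ((γ : K) - r) ^ 5 = e := by
    have := congrArg (algebraMap (𝓞 K) K) h
    simpa using this
  have := norm_of_sub_pow_five (γ : K) r e h1 he hK
  rw [← Algebra.coe_norm_int] at this
  exact_mod_cast this



/-- A nonzero prime ideal containing an element of prime norm is generated by it. -/
lemma isPrincipal_of_mem_of_prime_absNorm {R : Type*} [CommRing R] [IsDedekindDomain R]
    [Module.Free ℤ R] {P : Ideal R} (hP : P.IsPrime)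
    {g : R} (hg : g ∈ P) (h : (Ideal.absNorm (Ideal.span {g})).Prime) : P.IsPrincipal := by
  have hp : (Ideal.span {g}).IsPrime := Ideal.isPrime_of_irreducible_absNorm h
  have hmax : (Ideal.span {g}).IsMaximal := by
    refine hp.isMaximal ?_
    intro h0
    rw [h0, Ideal.absNorm_bot] at h
    exact Nat.not_prime_zero h
  exact ⟨g, (hmax.eq_of_le hP.ne_top ((Ideal.span_singleton_le_iff_mem _).2 hg)).symm⟩

lemma residue_cases {F : Type*} [Field F] [Finite F] (a : F) (ha : a ^ 5 = 2)
    (h : Nat.card F ≤ 13) :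
    a = 0 ∨ a + 1 = 0 ∨ a ^ 2 + 1 = 0 ∨ a ^ 3 - 1 = 0 ∨ 2 * a ^ 3 - 3 = 0 := by
  have := Fintype.ofFinite F
  rw [Nat.card_eq_fintype_card] at h
  have h0 : ((Fintype.card F : ℕ) : F) = 0 := FiniteField.cast_card_eq_zero F
  have h1 : 1 < Fintype.card F := Fintype.one_lt_card
  have hq : a ^ Fintype.card F = a := FiniteField.pow_card a
  have two (h : (2 : F) = 0) : a = 0 := by
    rw [h] at ha; exact pow_eq_zero_iff (by norm_num) |>.1 ha
  by_cases ha0 : a = 0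
  · exact Or.inl ha0
  have h20 : (2 : F) ≠ 0 := fun h => ha0 (two h)
  generalize Fintype.card F = q at *
  interval_cases q
  all_goals norm_num at h0
  · exact absurd h0 h20
  · have h2 : a ^ 2 = 1 := mul_left_cancel₀ ha0 (by linear_combination hq)
    right; left
    linear_combination ha - (a ^ 3 + a) * h2 + h0
  · exact absurd (mul_self_eq_zero.1 (by linear_combination h0)) h20
  · right; right; left
    have h2 : a = 2 := by rw [← ha, hq]
    subst h2; linear_combination h0
  · have h3 : (3 : F) = 0 := (mul_eq_zero.1
      (show (2 : F) * 3 = 0 by linear_combination h0)).resolve_left h20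
    exact absurd (by linear_combination hq - a * ha) ha0
  · have h2 : 2 * a = 1 := mul_left_cancel₀ ha0 (by linear_combination hq - a ^ 2 * ha)
    have h4 : a = 4 := by linear_combination 4 * h2 - a * h0
    right; right; right; left
    subst h4; linear_combination 9 * h0
  · exact absurd (pow_eq_zero_iff (n := 3) (by norm_num) |>.1 (by linear_combination h0)) h20
  · have h3 : (3 : F) = 0 := mul_self_eq_zero.1 (by linear_combination h0)
    have h2 : 2 * a ^ 3 = 1 := mul_left_cancel₀ ha0 (by linear_combination hq - a ^ 4 * ha)
    have h4 : a ^ 3 = -1 := by linear_combination 2 * h2 - (a ^ 3 - 1) * h3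
    have h5 : a ^ 2 = 1 := by linear_combination a ^ 2 * h4 - ha - h3
    right; left
    linear_combination h4 - a * h5
  · have h2 : a = 4 := by linear_combination -hq + (a ^ 5 + 2) * ha
    subst h2
    exact absurd (by linear_combination ha - 102 * h0) h20
  · have h3 : 3 * a = 0 := by linear_combination hq - (a ^ 6 + 2 * a) * ha
    have h4 : (3 : F) = 0 := (mul_eq_zero.1 h3).resolve_right ha0
    exact absurd (by linear_combination h0 - 3 * h4) h20
  · have h3 : (3 : F) = 0 := (mul_eq_zero.1
      (show (2 * 2 : F) * 3 = 0 by linear_combination h0)).resolve_left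
      (mul_ne_zero h20 h20)
    have h4 : 4 * a = 1 := mul_left_cancel₀ ha0
      (by linear_combination hq - (a ^ 7 + 2 * a ^ 2) * ha)
    have h5 : a = 1 := by linear_combination h4 - a * h3
    subst h5
    exact absurd (by linear_combination -ha) one_ne_zero
  · have h2 : 4 * a ^ 2 = 1 := mul_left_cancel₀ ha0
      (by linear_combination hq - (a ^ 8 + 2 * a ^ 3) * ha)
    have h4 : a ^ 2 = -3 := by linear_combination 10 * h2 - (3 * a ^ 2 - 1) * h0
    have h5 : a = 6 := by linear_combination 3 * ha - (3 * a ^ 3 - 9 * a) * h4 - 2 * a * h0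
    right; right; right; right
    subst h5; linear_combination 33 * h0

/-- In a number field of degree five generated by a fifth root of `2`, prime ideals of norm at
most `13` are principal. -/
lemma isPrincipal_of_absNorm_le {K : Type*} [Field K] [NumberField K] {α : 𝓞 K} (hα : α ^ 5 = 2)
    (hK : finrank ℚ K = 5) (P : Ideal (𝓞 K)) (hP : P.IsPrime) (h : Ideal.absNorm P ≤ 13) :
    P.IsPrincipal := by
  by_cases h0 : P = ⊥
  · rw [h0]; exact bot_isPrincipal
  have hmax : P.IsMaximal := hP.isMaximal h0
  let _ : Field (𝓞 K ⧸ P) := Ideal.Quotient.field P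
  have hcard : Nat.card (𝓞 K ⧸ P) ≤ 13 := by
    rwa [Ideal.absNorm_apply, Submodule.cardQuot_apply] at h
  have : Finite (𝓞 K ⧸ P) := Ideal.finiteQuotientOfFreeOfNeBot P h0
  have key (γ : 𝓞 K) (hγ : γ ∈ P) (r : ℤ) (n : ℕ) (hn : ¬ 5 ∣ n) (he : (γ - r) ^ 5 = 2 ^ n)
      (hp : (r ^ 5 + 2 ^ n).natAbs.Prime) : P.IsPrincipal := by
    refine isPrincipal_of_mem_of_prime_absNorm hP hγ ?_
    rw [absNorm_span_of_sub_pow_five γ r (2 ^ n) (by exact_mod_cast he)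
      (fun b => by exact_mod_cast rat_pow_five_ne_two_pow hn b) hK]
    exact hp
  have hmem (γ : 𝓞 K) : Ideal.Quotient.mk P γ = 0 → γ ∈ P := Ideal.Quotient.eq_zero_iff_mem.1
  rcases residue_cases (Ideal.Quotient.mk P α) (by rw [← map_pow, hα, map_ofNat]) hcard with
    h | h | h | h | h
  · exact key α (hmem _ h) 0 1 (by norm_num) (by push_cast; linear_combination hα) (by norm_num)
  · exact key (α + 1) (hmem _ (by simpa using h)) 1 1 (by norm_num)
      (by push_cast; linear_combination hα) (by norm_num)
  · exact key (α ^ 2 + 1) (hmem _ (by simpa using h)) 1 2 (by norm_num)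
      (by push_cast; linear_combination (α ^ 5 + 2) * hα) (by norm_num)
  · exact key (α ^ 3 - 1) (hmem _ (by simpa using h)) (-1) 3 (by norm_num)
      (by push_cast; linear_combination (α ^ 10 + 2 * α ^ 5 + 4) * hα) (by norm_num)
  · exact key (2 * α ^ 3 - 3)
      (hmem _ (by rw [map_sub, map_mul, map_pow, map_ofNat, map_ofNat]; exact h)) (-3) 8
      (by norm_num)
      (by push_cast; linear_combination 32 * (α ^ 10 + 2 * α ^ 5 + 4) * hα) (by norm_num)

section
lemma coe_fifth_root {K : Type*} [Field K] {α : 𝓞 K} (hα : α ^ 5 = 2) : (α : K) ^ 5 = 2 := by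
  have := congrArg (algebraMap (𝓞 K) K) hα
  simpa only [map_pow, map_ofNat] using this

variable {K : Type*} [Field K] [NumberField K] {α : 𝓞 K}

lemma minpoly_fifth_root (hα : α ^ 5 = 2) (hK : finrank ℚ K = 5) :
    minpoly ℚ (α : K) = X ^ 5 - C 2 := by
  have := minpoly_of_sub_pow_five (α : K) 0 2 (by simpa using coe_fifth_root hα)
    (fun b => by simpa using rat_pow_five_ne_two_pow (n := 1) (by norm_num) b) hK
  simpa using this

lemma adjoin_fifth_root (hα : α ^ 5 = 2) (hK : finrank ℚ K = 5) :
    Algebra.adjoin ℚ {(α : K)} = ⊤ := by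
  have h : IntermediateField.adjoin ℚ {(α : K)} = ⊤ := by
    rw [Field.primitive_element_iff_minpoly_natDegree_eq, minpoly_fifth_root hα hK, hK,
      natDegree_X_pow_sub_C]
  rw [← IntermediateField.adjoin_simple_toSubalgebra_of_isAlgebraic
    (Algebra.IsAlgebraic.isAlgebraic _), h, IntermediateField.top_toSubalgebra]

lemma natAbs_discr_le (hα : α ^ 5 = 2) (hK : finrank ℚ K = 5) : (discr K).natAbs ≤ 50000 := by
  have h := aeval_derivative_mem_differentIdeal ℤ ℚ K α (adjoin_fifth_root hα hK)
  have hm : minpoly ℤ α = X ^ 5 - C 2 := by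
    have h1 := minpoly.isIntegrallyClosed_eq_field_fractions ℚ K
      (Algebra.IsIntegral.isIntegral (R := ℤ) α)
    rw [show (algebraMap (𝓞 K) K) α = (α : K) from rfl, minpoly_fifth_root hα hK] at h1
    apply Polynomial.map_injective (algebraMap ℤ ℚ) (algebraMap ℤ ℚ).injective_int
    rw [← h1]; simpa using map_ofNat C 2
  have h2 : Ideal.absNorm (Ideal.span {(5 * α ^ 4 : 𝓞 K)}) = 50000 := by
    have h3 := absNorm_span_of_sub_pow_five α 0 2 (by simpa using hα)
      (fun b => by simpa using rat_pow_five_ne_two_pow (n := 1) (by norm_num) b) hK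
    have h5 : Algebra.norm ℤ (5 : 𝓞 K) = 5 ^ 5 := by
      have := Algebra.norm_algebraMap_of_basis (RingOfIntegers.basis K) (5 : ℤ)
      rw [map_ofNat] at this
      rw [this, ← finrank_eq_card_basis (RingOfIntegers.basis K), RingOfIntegers.rank, hK]
    rw [Ideal.absNorm_span_singleton] at h3 ⊢
    rw [map_mul, map_pow, h5, Int.natAbs_mul, Int.natAbs_pow, Int.natAbs_pow, h3]
    norm_num
  rw [hm] at h
  have h4 : (aeval α) (derivative (X ^ 5 - C 2 : ℤ[X])) = 5 * α ^ 4 := by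
    simpa using Or.inl (map_ofNat (aeval α) 5)
  rw [h4] at h
  rw [← absNorm_differentIdeal K (𝓞 K), ← h2]
  refine Nat.le_of_dvd (by rw [h2]; norm_num) ?_
  exact Ideal.absNorm_dvd_absNorm_of_le ((Ideal.span_singleton_le_iff_mem _).2 h)

lemma isPrincipalIdealRing_of_fifth_root (hα : α ^ 5 = 2) (hK : finrank ℚ K = 5) :
    IsPrincipalIdealRing (𝓞 K) := by
  apply RingOfIntegers.isPrincipalIdealRing_of_isPrincipal_of_norm_le_of_isPrime
  intro I hI hle
  refine isPrincipal_of_absNorm_le hα hK _ hI ?_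
  have hd : ((|discr K| : ℤ) : ℝ) ≤ 50000 := by
    rw [Int.abs_eq_natAbs]; exact_mod_cast natAbs_discr_le hα hK
  have hr : InfinitePlace.nrComplexPlaces K ≤ 2 := by
    have := InfinitePlace.card_add_two_mul_card_eq_rank K
    omega
  have hs : √((|discr K| : ℤ) : ℝ) ≤ 224 := by
    rw [Real.sqrt_le_left (by norm_num)]; linarith
  have hpi : 1 ≤ 4 / Real.pi := by
    rw [le_div_iff₀ Real.pi_pos]; linarith [Real.pi_le_four]
  have hpi2 : 4 / Real.pi ≤ 1.274 := by
    rw [div_le_iff₀ Real.pi_pos]; linarith [Real.pi_gt_d4]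
  have h1 : (4 / Real.pi) ^ InfinitePlace.nrComplexPlaces K ≤ 1.274 ^ 2 :=
    (pow_le_pow_right₀ hpi hr).trans (by gcongr)
  rw [hK] at hle
  have h2 : ((Nat.factorial 5 : ℝ) / 5 ^ 5 * √((|discr K| : ℤ) : ℝ)) ≤ 8.61 := by
    norm_num [Nat.factorial]; push_cast at hs; linarith
  have h3 : (4 / Real.pi) ^ InfinitePlace.nrComplexPlaces K *
      ((Nat.factorial 5 : ℝ) / 5 ^ 5 * √((|discr K| : ℤ) : ℝ)) ≤ 1.274 ^ 2 * 8.61 := by gcongr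
  have h4 : (Ideal.absNorm (I : Ideal (𝓞 K)) : ℝ) < 14 := by
    refine lt_of_le_of_lt (hle.trans ?_) (lt_of_le_of_lt h3 (by norm_num))
    push_cast; rfl
  have h5 : Ideal.absNorm (I : Ideal (𝓞 K)) < 14 := by exact_mod_cast h4
  omega

lemma nrRealPlaces_of_fifth_root (hα : α ^ 5 = 2) (hK : finrank ℚ K = 5) :
    InfinitePlace.nrRealPlaces K = 1 := by
  refine le_antisymm ?_ (InfinitePlace.nrRealPlaces_pos_of_odd_finrank (by rw [hK]; decide))
  classical
  rw [← InfinitePlace.card_real_embeddings, Fintype.card_le_one_iff_subsingleton]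
  refine ⟨fun φ ψ => Subtype.ext ?_⟩
  have hval (χ : {φ : K →+* ℂ // ComplexEmbedding.IsReal φ}) :
      ∃ r : ℝ, (r : ℂ) = χ.1 α ∧ r ^ 5 = 2 := by
    refine ⟨χ.2.embedding α, by simp, ?_⟩
    rw [← map_pow, coe_fifth_root hα, map_ofNat]
  obtain ⟨r, hr, hr5⟩ := hval φ
  obtain ⟨s, hs, hs5⟩ := hval ψ
  have hrs : r = s := (Odd.strictMono_pow (n := 5) (by decide)).injective (hr5.trans hs5.symm)
  have : φ.1.toRatAlgHom = ψ.1.toRatAlgHom := by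
    refine AlgHom.ext_of_adjoin_eq_top (adjoin_fifth_root hα hK) ?_
    intro x hx
    rw [Set.mem_singleton_iff.1 hx]
    simp [← hr, ← hs, hrs]
  ext x
  exact DFunLike.congr_fun this x

lemma rank_of_fifth_root (hα : α ^ 5 = 2) (hK : finrank ℚ K = 5) : Units.rank K = 2 := by
  have h1 := nrRealPlaces_of_fifth_root hα hK
  have h2 := InfinitePlace.card_add_two_mul_card_eq_rank K
  have h3 := InfinitePlace.card_eq_nrRealPlaces_add_nrComplexPlaces K
  rw [Units.rank]
  omega
end

/-- Coordinates of `(u₀ + u₁ π + ⋯ + u₄ π ^ 4) * (v₀ + v₁ π + ⋯ + v₄ π ^ 4)` when `π ^ 5 = 2`. -/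
def fifthMul (u v : ℤ × ℤ × ℤ × ℤ × ℤ) : ℤ × ℤ × ℤ × ℤ × ℤ :=
  match u, v with
  | (u₀, u₁, u₂, u₃, u₄), (v₀, v₁, v₂, v₃, v₄) =>
    (u₀ * v₀ + 2 * (u₁ * v₄ + u₂ * v₃ + u₃ * v₂ + u₄ * v₁),
      u₀ * v₁ + u₁ * v₀ + 2 * (u₂ * v₄ + u₃ * v₃ + u₄ * v₂),
      u₀ * v₂ + u₁ * v₁ + u₂ * v₀ + 2 * (u₃ * v₄ + u₄ * v₃),
      u₀ * v₃ + u₁ * v₂ + u₂ * v₁ + u₃ * v₀ + 2 * (u₄ * v₄),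
      u₀ * v₄ + u₁ * v₃ + u₂ * v₂ + u₃ * v₁ + u₄ * v₀)

/-- The element `u₀ + u₁ π + u₂ π ^ 2 + u₃ π ^ 3 + u₄ π ^ 4`. -/
def fifthEval {W : Type*} [CommRing W] (π : W) (u : ℤ × ℤ × ℤ × ℤ × ℤ) : W :=
  u.1 + u.2.1 * π + u.2.2.1 * π ^ 2 + u.2.2.2.1 * π ^ 3 + u.2.2.2.2 * π ^ 4

/-- The coordinates of `-1`, `π - 1`, `1 + π + π ^ 3`, `1 + π ^ 2` or `1`. -/
def selmerCoord (e : Bool × Bool × Bool × Bool) : ℤ × ℤ × ℤ × ℤ × ℤ :=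
  fifthMul (fifthMul (bif e.1 then (-1, 0, 0, 0, 0) else (1, 0, 0, 0, 0))
      (bif e.2.1 then (-1, 1, 0, 0, 0) else (1, 0, 0, 0, 0)))
    (fifthMul (bif e.2.2.1 then (1, 1, 0, 1, 0) else (1, 0, 0, 0, 0))
      (bif e.2.2.2 then (1, 0, 1, 0, 0) else (1, 0, 0, 0, 0)))

/-- The product of the elements `-1`, `π - 1`, `1 + π + π ^ 3`, `1 + π ^ 2` selected by `e`. -/
def selmerElt {W : Type*} [CommRing W] (π : W) (e : Bool × Bool × Bool × Bool) : W :=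
  (bif e.1 then -1 else 1) * (bif e.2.1 then π - 1 else 1) *
    ((bif e.2.2.1 then 1 + π + π ^ 3 else 1) * (bif e.2.2.2 then 1 + π ^ 2 else 1))

lemma map_selmerElt {R W : Type*} [CommRing R] [CommRing W] (f : R →+* W) (π : R)
    (e : Bool × Bool × Bool × Bool) : f (selmerElt π e) = selmerElt (f π) e := by
  obtain ⟨e₁, e₂, e₃, e₄⟩ := e
  cases e₁ <;> cases e₂ <;> cases e₃ <;> cases e₄ <;> simp [selmerElt]

section
variable {W : Type*} [CommRing W] {π : W}

lemma fifthEval_mul (h2 : π ^ 5 = 2) (u v : ℤ × ℤ × ℤ × ℤ × ℤ) :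
    fifthEval π (fifthMul u v) = fifthEval π u * fifthEval π v := by
  obtain ⟨u₀, u₁, u₂, u₃, u₄⟩ := u
  obtain ⟨v₀, v₁, v₂, v₃, v₄⟩ := v
  simp only [fifthEval, fifthMul]
  push_cast
  linear_combination (-((u₁ * v₄ + u₂ * v₃ + u₃ * v₂ + u₄ * v₁ : W) +
    (u₂ * v₄ + u₃ * v₃ + u₄ * v₂) * π + (u₃ * v₄ + u₄ * v₃) * π ^ 2 + u₄ * v₄ * π ^ 3)) * h2

lemma fifthEval_selmerCoord (h2 : π ^ 5 = 2) (e : Bool × Bool × Bool × Bool) :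
    fifthEval π (selmerCoord e) = selmerElt π e := by
  obtain ⟨e₁, e₂, e₃, e₄⟩ := e
  simp only [selmerCoord, selmerElt, fifthEval_mul h2]
  congr 2
  · cases e₁ <;> simp [fifthEval]
  · cases e₂ <;> simp [fifthEval]; ring
  · cases e₃ <;> simp [fifthEval]
  · cases e₄ <;> simp [fifthEval]

lemma selmerElt_mul (e f : Bool × Bool × Bool × Bool) :
    ∃ w : W, selmerElt π e * selmerElt π f =
      selmerElt π (xor e.1 f.1, xor e.2.1 f.2.1, xor e.2.2.1 f.2.2.1, xor e.2.2.2 f.2.2.2) *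
        w ^ 2 := by
  have key (x : W) (a b : Bool) : (bif a then x else 1) * (bif b then x else 1) =
      (bif xor a b then x else 1) * (bif a && b then x else 1) ^ 2 := by
    cases a <;> cases b <;> simp [sq]
  refine ⟨selmerElt π (e.1 && f.1, e.2.1 && f.2.1, e.2.2.1 && f.2.2.1, e.2.2.2 && f.2.2.2), ?_⟩
  have k₁ := key (-1) e.1 f.1
  have k₂ := key (π - 1) e.2.1 f.2.1
  have k₃ := key (1 + π + π ^ 3) e.2.2.1 f.2.2.1
  have k₄ := key (1 + π ^ 2) e.2.2.2 f.2.2.2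
  simp only [selmerElt]
  calc _ = ((bif e.1 then (-1 : W) else 1) * (bif f.1 then -1 else 1)) *
      ((bif e.2.1 then π - 1 else 1) * (bif f.2.1 then π - 1 else 1)) *
      ((bif e.2.2.1 then 1 + π + π ^ 3 else 1) * (bif f.2.2.1 then 1 + π + π ^ 3 else 1)) *
      ((bif e.2.2.2 then 1 + π ^ 2 else 1) * (bif f.2.2.2 then 1 + π ^ 2 else 1)) := by ring
    _ = _ := by rw [k₁, k₂, k₃, k₄]; ring

lemma even_of_dvd_fifthEval (h2 : π ^ 5 = 2) (h1 : ¬ π ∣ 1) {a b c d e : ℤ}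
    (h : π ∣ fifthEval π (a, b, c, d, e)) : ∃ f, a = 2 * f := by
  rcases Int.even_or_odd' a with ⟨f, rfl | rfl⟩
  · exact ⟨f, rfl⟩
  · refine absurd ?_ h1
    obtain ⟨t, ht⟩ := h
    refine ⟨t - b - c * π - d * π ^ 2 - e * π ^ 3 - π ^ 4 * f, ?_⟩
    simp only [fifthEval] at ht
    push_cast at ht
    linear_combination ht + f * h2

variable [IsDomain W]

lemma pow_dvd_fifthEval_shift (h2 : π ^ 5 = 2) (h0 : π ≠ 0) {n : ℕ} {f b c d e : ℤ}
    (h : π ^ (n + 1) ∣ fifthEval π (2 * f, b, c, d, e)) :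
    π ^ n ∣ fifthEval π (b, c, d, e, f) := by
  obtain ⟨t, ht⟩ := h
  refine ⟨t, mul_left_cancel₀ h0 ?_⟩
  simp only [fifthEval] at ht ⊢
  push_cast at ht
  linear_combination ht + f * h2

lemma dvd_coord_of_pow_eleven_dvd (h2 : π ^ 5 = 2) (h0 : π ≠ 0) (h1 : ¬ π ∣ 1)
    {u : ℤ × ℤ × ℤ × ℤ × ℤ} (h : π ^ 11 ∣ fifthEval π u) :
    8 ∣ u.1 ∧ 4 ∣ u.2.1 ∧ 4 ∣ u.2.2.1 ∧ 4 ∣ u.2.2.2.1 ∧ 4 ∣ u.2.2.2.2 := by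
  obtain ⟨a, b, c, d, e⟩ := u
  have step {n : ℕ} {a b c d e : ℤ} (h : π ^ (n + 1) ∣ fifthEval π (a, b, c, d, e)) :
      ∃ f, a = 2 * f ∧ π ^ n ∣ fifthEval π (b, c, d, e, f) := by
    obtain ⟨f, rfl⟩ := even_of_dvd_fifthEval h2 h1 ((dvd_pow_self π n.succ_ne_zero).trans h)
    exact ⟨f, rfl, pow_dvd_fifthEval_shift h2 h0 h⟩
  obtain ⟨A, hA, g1⟩ := step h
  obtain ⟨B, hB, g2⟩ := step g1
  obtain ⟨C, hC, g3⟩ := step g2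
  obtain ⟨D, hD, g4⟩ := step g3
  obtain ⟨E, hE, g5⟩ := step g4
  obtain ⟨F, hF, g6⟩ := step g5
  obtain ⟨G, hG, g7⟩ := step g6
  obtain ⟨H, hH, g8⟩ := step g7
  obtain ⟨I, hI, g9⟩ := step g8
  obtain ⟨J, hJ, g10⟩ := step g9
  obtain ⟨K, hK, g11⟩ := step g10
  simp only
  omega

omit [IsDomain W] in
lemma exists_digits (hres : ∀ x : W, π ∣ x ∨ π ∣ x - 1) (n : ℕ) (z : W) :
    ∃ b : Fin n → Bool, π ^ n ∣ z - ∑ i, (bif b i then 1 else 0) * π ^ (i : ℕ) := by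
  induction n generalizing z with
  | zero => exact ⟨Fin.elim0, by simp⟩
  | succ n ih =>
    obtain ⟨c, y, hy⟩ : ∃ c : Bool, π ∣ z - bif c then 1 else 0 := by
      rcases hres z with h | h
      · exact ⟨false, by simpa using h⟩
      · exact ⟨true, by simpa using h⟩
    obtain ⟨b, t, ht⟩ := ih y
    refine ⟨Fin.cons c b, t, ?_⟩
    rw [Fin.sum_univ_succ]
    simp only [Fin.cons_zero, Fin.cons_succ, Fin.val_zero, pow_zero, Fin.val_succ,
      pow_succ _ (_ : ℕ),
      mul_one, ← mul_assoc, ← Finset.sum_mul]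
    linear_combination hy + π * ht

lemma selmerCoord_independent : ∀ (e : Bool × Bool × Bool × Bool) (b₁ b₂ b₃ b₄ b₅ : Bool),
    (fun w : ℤ × ℤ × ℤ × ℤ × ℤ => 8 ∣ w.1 - 1 ∧ 4 ∣ w.2.1 ∧ 4 ∣ w.2.2.1 ∧ 4 ∣ w.2.2.2.1 ∧
      4 ∣ w.2.2.2.2) (fifthMul (selmerCoord e) ((fun v => fifthMul v v)
        (bif b₅ then 3 else 1, bif b₁ then 1 else 0, bif b₂ then 1 else 0, bif b₃ then 1 else 0,
          bif b₄ then 1 else 0))) → e = (false, false, false, false) := by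
  decide +kernel

lemma selmerElt_independent (h2 : π ^ 5 = 2) (h0 : π ≠ 0) (h1 : ¬ π ∣ 1)
    (hres : ∀ x : W, π ∣ x ∨ π ∣ x - 1) {e : Bool × Bool × Bool × Bool} {z : W}
    (h : π ^ 11 ∣ selmerElt π e * z ^ 2 - 1) : e = (false, false, false, false) := by
  obtain ⟨b, t, ht⟩ := exists_digits hres 6 z
  rw [Fin.sum_univ_six] at ht
  have hcast (c : Bool) : (((bif c then 1 else 0 : ℤ)) : W) = bif c then 1 else 0 := by
    cases c <;> simp
  have hcast3 (c : Bool) : (((bif c then 3 else 1 : ℤ)) : W) = 1 + 2 * bif c then 1 else 0 := by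
    cases c <;> norm_num
  obtain ⟨y, hy⟩ := h
  have hb : b 0 = true := by
    by_contra hb
    rw [Bool.not_eq_true] at hb
    obtain ⟨s, hs⟩ : π ∣ z := by
      rw [sub_eq_iff_eq_add.1 ht, hb]
      refine dvd_add ((dvd_pow_self π (by norm_num)).mul_right t) ?_
      simp only [cond_false, zero_mul, zero_add]
      refine dvd_add (dvd_add (dvd_add (dvd_add ?_ ?_) ?_) ?_) ?_ <;>
        exact (dvd_pow_self π (by decide)).mul_left _
    refine h1 ⟨selmerElt π e * s * z - π ^ 10 * y, ?_⟩
    linear_combination selmerElt π e * z * hs - hy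
  set v : ℤ × ℤ × ℤ × ℤ × ℤ := (bif b 5 then 3 else 1, bif b 1 then 1 else 0,
    bif b 2 then 1 else 0, bif b 3 then 1 else 0, bif b 4 then 1 else 0) with hv
  have hz : z = fifthEval π v + π ^ 6 * t := by
    simp only [hv, fifthEval, hcast, hcast3]
    rw [hb] at ht
    simp only [cond_true, show ((0 : Fin 6) : ℕ) = 0 from rfl, show ((1 : Fin 6) : ℕ) = 1 from rfl,
      show ((2 : Fin 6) : ℕ) = 2 from rfl, show ((3 : Fin 6) : ℕ) = 3 from rfl,
      show ((4 : Fin 6) : ℕ) = 4 from rfl, show ((5 : Fin 6) : ℕ) = 5 from rfl] at ht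
    linear_combination ht + (bif b 5 then 1 else 0) * h2
  refine selmerCoord_independent e (b 1) (b 2) (b 3) (b 4) (b 5) ?_
  have key : π ^ 11 ∣ fifthEval π (fifthMul (selmerCoord e) (fifthMul v v) - (1, 0, 0, 0, 0)) := by
    refine ⟨y - selmerElt π e * (fifthEval π v * t + π * t ^ 2), ?_⟩
    have hsub (w : ℤ × ℤ × ℤ × ℤ × ℤ) : fifthEval π (w - (1, 0, 0, 0, 0)) = fifthEval π w - 1 := by
      simp [fifthEval]; ring
    rw [hsub, fifthEval_mul h2, fifthEval_mul h2, fifthEval_selmerCoord h2]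
    linear_combination hy - selmerElt π e * (z + fifthEval π v + π ^ 6 * t) * hz +
      selmerElt π e * fifthEval π v * π ^ 6 * t * h2
  simpa using dvd_coord_of_pow_eleven_dvd h2 h0 h1 key
end

section
variable {K : Type*} [Field K] [NumberField K] {α : 𝓞 K}

lemma absNorm_fifth_root (hα : α ^ 5 = 2) (hK : finrank ℚ K = 5) :
    Ideal.absNorm (Ideal.span {α}) = 2 := by
  simpa using absNorm_span_of_sub_pow_five α 0 2 (by simpa using hα)
    (fun b => by simpa using rat_pow_five_ne_two_pow (n := 1) (by norm_num) b) hK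

lemma fifth_root_ne_zero (hα : α ^ 5 = 2) : α ≠ 0 := by
  rintro rfl
  norm_num at hα

lemma prime_fifth_root (hα : α ^ 5 = 2) (hK : finrank ℚ K = 5) : Prime α := by
  rw [← Ideal.span_singleton_prime (fifth_root_ne_zero hα)]
  exact Ideal.isPrime_of_irreducible_absNorm (by rw [absNorm_fifth_root hα hK]; exact Nat.prime_two)

lemma not_fifth_root_dvd_one (hα : α ^ 5 = 2) (hK : finrank ℚ K = 5) : ¬ α ∣ 1 := fun h =>
  (prime_fifth_root hα hK).not_isUnit (isUnit_of_dvd_one h)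

lemma fifth_root_dvd_or_dvd_sub_one (hα : α ^ 5 = 2) (hK : finrank ℚ K = 5) (x : 𝓞 K) :
    α ∣ x ∨ α ∣ x - 1 := by
  have hcard : Nat.card (𝓞 K ⧸ Ideal.span {α}) = 2 := by
    rw [← absNorm_fifth_root hα hK, Ideal.absNorm_apply, Submodule.cardQuot_apply]
  have h01 : (0 : 𝓞 K ⧸ Ideal.span {α}) ≠ 1 := by
    intro h
    rw [← map_one (Ideal.Quotient.mk (Ideal.span {α})), eq_comm, Ideal.Quotient.eq_zero_iff_mem,
      Ideal.mem_span_singleton] at h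
    exact not_fifth_root_dvd_one hα hK h
  obtain ⟨y, z, hyz, huniv⟩ := Nat.card_eq_two_iff.1 hcard
  have hall (w : 𝓞 K ⧸ Ideal.span {α}) : w = 0 ∨ w = 1 := by
    have h0 : (0 : 𝓞 K ⧸ Ideal.span {α}) ∈ ({y, z} : Set _) := huniv ▸ Set.mem_univ _
    have h1 : (1 : 𝓞 K ⧸ Ideal.span {α}) ∈ ({y, z} : Set _) := huniv ▸ Set.mem_univ _
    have hw : w ∈ ({y, z} : Set _) := huniv ▸ Set.mem_univ _
    simp only [Set.mem_insert_iff, Set.mem_singleton_iff] at h0 h1 hw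
    grind
  rcases hall (Ideal.Quotient.mk _ x) with h | h
  · left
    rwa [Ideal.Quotient.eq_zero_iff_mem, Ideal.mem_span_singleton] at h
  · right
    rwa [← sub_eq_zero, ← map_one (Ideal.Quotient.mk (Ideal.span {α})), ← map_sub,
      Ideal.Quotient.eq_zero_iff_mem, Ideal.mem_span_singleton] at h

/-- The product of the units `-1`, `u`, `v` selected by `e`. -/
def unitElt {U : Type*} [Monoid U] [HasDistribNeg U] (u v : U) (e : Bool × Bool × Bool) : U :=
  (bif e.1 then -1 else 1) * (bif e.2.1 then u else 1) * (bif e.2.2 then v else 1)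

lemma exists_eq_unitElt_mul_sq (hα : α ^ 5 = 2) (hK : finrank ℚ K = 5) {u v : (𝓞 K)ˣ}
    (hu : (u : 𝓞 K) = α - 1) (hv : (v : 𝓞 K) = 1 + α + α ^ 3) (x : (𝓞 K)ˣ) :
    ∃ e y, x = unitElt u v e * y ^ 2 := by
  let Q := (𝓞 K)ˣ ⧸ (powMonoidHom 2 : (𝓞 K)ˣ →* (𝓞 K)ˣ).range
  have hmk (x y : (𝓞 K)ˣ) : (x : Q) = y ↔ ∃ z, y = x * z ^ 2 := by
    rw [QuotientGroup.eq]
    constructor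
    · rintro ⟨z, hz⟩
      exact ⟨z, by rw [show z ^ 2 = x⁻¹ * y from hz]; group⟩
    · rintro ⟨z, rfl⟩
      exact ⟨z, by simp⟩
  have hr := rank_of_fifth_root hα hK
  have hodd : Odd (finrank ℚ K) := by rw [hK]; decide
  have hval (e : Bool × Bool × Bool) : ((unitElt u v e : (𝓞 K)ˣ) : 𝓞 K) =
      selmerElt α (e.1, e.2.1, e.2.2, false) := by
    obtain ⟨e₁, e₂, e₃⟩ := e
    cases e₁ <;> cases e₂ <;> cases e₃ <;> simp [unitElt, selmerElt, hu, hv] <;> ring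
  let g : Bool × Bool × Bool → Q := fun e => (unitElt u v e : (𝓞 K)ˣ)
  have hg : Function.Injective g := by
    intro e f hef
    obtain ⟨z, hz⟩ := (hmk _ _).1 hef
    obtain ⟨w, hw⟩ := selmerElt_mul (π := α) (e.1, e.2.1, e.2.2, false) (f.1, f.2.1, f.2.2, false)
    have hz' := congrArg (Units.val) hz
    push_cast at hz'
    rw [hval, hval] at hz'
    obtain ⟨k, hk⟩ : ∃ k : 𝓞 K, selmerElt α (e.1, e.2.1, e.2.2, false) * z * k = 1 := by
      rw [← hval, ← Units.val_mul]
      exact ⟨_, Units.mul_inv _⟩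
    simp only [Bool.xor_false] at hw
    have hzero := selmerElt_independent hα (fifth_root_ne_zero hα)
      (not_fifth_root_dvd_one hα hK) (fifth_root_dvd_or_dvd_sub_one hα hK)
      (e := (xor e.1 f.1, xor e.2.1 f.2.1, xor e.2.2 f.2.2, false)) (z := w * k) ⟨0, by
        linear_combination -k ^ 2 * hw + k ^ 2 * selmerElt α (e.1, e.2.1, e.2.2, false) * hz' +
          (selmerElt α (e.1, e.2.1, e.2.2, false) * z * k + 1) * hk⟩
    simp only [Prod.mk.injEq, bne_eq_false_iff_eq, and_true] at hzero
    exact Prod.ext hzero.1 (Prod.ext hzero.2.1 hzero.2.2)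
  let G : Bool × Bool × Bool → Q := fun e =>
    (unitElt (Units.fundSystem K (Fin.cast hr.symm 0)) (Units.fundSystem K (Fin.cast hr.symm 1)) e :
      (𝓞 K)ˣ)
  have hG : Function.Surjective G := by
    intro q
    obtain ⟨x, rfl⟩ := QuotientGroup.mk_surjective q
    obtain ⟨⟨ζ, n⟩, hx, -⟩ := Units.exist_unique_eq_mul_prod K x
    have hprod : ∏ i, Units.fundSystem K i ^ n i =
        Units.fundSystem K (Fin.cast hr.symm 0) ^ n (Fin.cast hr.symm 0) *
          Units.fundSystem K (Fin.cast hr.symm 1) ^ n (Fin.cast hr.symm 1) := by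
      rw [← Equiv.prod_comp (finCongr hr.symm), Fin.prod_univ_two]
      rfl
    have hpow (y : (𝓞 K)ˣ) (m : ℤ) :
        ∃ (b : Bool) (l : ℤ), y ^ m = (bif b then y else 1) * (y ^ l) ^ 2 := by
      rcases Int.even_or_odd' m with ⟨l, rfl | rfl⟩
      · exact ⟨false, l, by simp [mul_comm 2 l, zpow_mul]⟩
      · exact ⟨true, l, by rw [zpow_add, mul_comm 2 l, zpow_mul, zpow_one, mul_comm]; rfl⟩
    obtain ⟨b₁, l₁, h₁⟩ := hpow (Units.fundSystem K (Fin.cast hr.symm 0)) (n (Fin.cast hr.symm 0))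
    obtain ⟨b₂, l₂, h₂⟩ := hpow (Units.fundSystem K (Fin.cast hr.symm 1)) (n (Fin.cast hr.symm 1))
    obtain ⟨b₀, h₀⟩ : ∃ b : Bool, (ζ : (𝓞 K)ˣ) = bif b then -1 else 1 := by
      rcases Units.torsion_eq_one_or_neg_one_of_odd_finrank hodd ζ with h | h
      · exact ⟨false, h⟩
      · exact ⟨true, h⟩
    refine ⟨(b₀, b₁, b₂), (hmk _ _).2 ⟨Units.fundSystem K (Fin.cast hr.symm 0) ^ l₁ *
      Units.fundSystem K (Fin.cast hr.symm 1) ^ l₂, ?_⟩⟩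
    rw [hx]
    simp only
    simp only [hprod, h₀, h₁, h₂, unitElt, mul_pow]
    ac_rfl
  have hle : Nat.card Q ≤ 8 := by
    simpa using Nat.card_le_card_of_surjective G hG
  have : Finite Q := Finite.of_surjective G hG
  obtain ⟨e, he⟩ := (hg.bijective_of_nat_card_le (by simpa using hle)).surjective (x : Q)
  obtain ⟨z, hz⟩ := (hmk _ _).1 he
  exact ⟨e, z, hz⟩
end

section
variable {K : Type*} [Field K] [NumberField K] {α : 𝓞 K}

lemma prime_one_add_fifth_root_sq (hα : α ^ 5 = 2) (hK : finrank ℚ K = 5) :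
    Prime (1 + α ^ 2) := by
  have h : Ideal.absNorm (Ideal.span {1 + α ^ 2}) = 5 := by
    rw [absNorm_span_of_sub_pow_five (1 + α ^ 2) 1 (2 ^ 2)
      (by push_cast; linear_combination (α ^ 5 + 2) * hα)
      (fun b => by exact_mod_cast rat_pow_five_ne_two_pow (n := 2) (by norm_num) b) hK]
    norm_num
  have h0 : 1 + α ^ 2 ≠ 0 := by
    intro h'
    simp [h'] at h
  rw [← Ideal.span_singleton_prime h0]
  exact Ideal.isPrime_of_irreducible_absNorm (by rw [h]; exact Nat.prime_five)

lemma exists_eq_selmerElt_mul_sq (hα : α ^ 5 = 2) (hK : finrank ℚ K = 5) {A B S : 𝓞 K}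
    (hS : S ≠ 0) (h : A * B = S ^ 2)
    (hAB : ∀ p, Prime p → p ∣ A → p ∣ B → p ∣ 5) :
    ∃ e t, A = selmerElt α e * t ^ 2 := by
  have := isPrincipalIdealRing_of_fifth_root hα hK
  have hπ := prime_one_add_fifth_root_sq hα hK
  have h5 : 5 ∣ (1 + α ^ 2) ^ 5 := ⟨(1 + α ^ 2) ^ 4 - 2 * (1 + α ^ 2) ^ 3 + 2 * (1 + α ^ 2) ^ 2 -
    (1 + α ^ 2) + 1, by linear_combination (α ^ 5 + 2) * hα⟩
  set π := 1 + α ^ 2 with hπdef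
  have hAB0 : A * B ≠ 0 := h ▸ pow_ne_zero 2 hS
  obtain ⟨m, A', hA', rfl⟩ := WfDvdMonoid.max_power_factor (left_ne_zero_of_mul hAB0) hπ.irreducible
  obtain ⟨n, B', hB', rfl⟩ := WfDvdMonoid.max_power_factor (right_ne_zero_of_mul hAB0)
    hπ.irreducible
  obtain ⟨k, S', hS', rfl⟩ := WfDvdMonoid.max_power_factor hS hπ.irreducible
  have hmn : m + n = 2 * k := by
    have h1 : emultiplicity π (π ^ m * A' * (π ^ n * B')) = (m + n : ℕ) := by
      rw [show π ^ m * A' * (π ^ n * B') = π ^ (m + n) * (A' * B') by ring]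
      rw [emultiplicity_mul hπ, emultiplicity_pow_self hπ.ne_zero hπ.not_isUnit,
        emultiplicity_eq_zero.2 (fun hd => (hπ.dvd_or_dvd hd).elim hA' hB'), add_zero]
    have h2 : emultiplicity π ((π ^ k * S') ^ 2) = (2 * k : ℕ) := by
      rw [mul_pow, ← pow_mul, emultiplicity_mul hπ,
        emultiplicity_pow_self hπ.ne_zero hπ.not_isUnit,
        emultiplicity_eq_zero.2 (fun hd => hS' (hπ.dvd_of_dvd_pow hd)), add_zero, mul_comm]
    rw [h, h2] at h1
    exact_mod_cast h1.symm
  have h' : A' * B' = S' ^ 2 := by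
    apply mul_left_cancel₀ (pow_ne_zero (2 * k) hπ.ne_zero)
    linear_combination h - (A' * B') * congrArg (π ^ ·) hmn
  have hcop : IsCoprime A' B' := by
    apply isCoprime_of_prime_dvd
    · rintro ⟨rfl, -⟩
      simp at hA'
    · intro p hp hpA hpB
      have hpπ : p ∣ π := hp.dvd_of_dvd_pow
        ((hAB p hp (hpA.mul_left _) (hpB.mul_left _)).trans h5)
      exact hA' ((hp.dvd_prime_iff_associated hπ).1 hpπ |>.symm.dvd.trans hpA)
  obtain ⟨t, x, ht⟩ := exists_associated_pow_of_mul_eq_pow' hcop h'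
  let u : (𝓞 K)ˣ := ⟨α - 1, 1 + α + α ^ 2 + α ^ 3 + α ^ 4, by linear_combination hα,
    by linear_combination hα⟩
  let v : (𝓞 K)ˣ := ⟨1 + α + α ^ 3, 1 - α - α ^ 2 + α ^ 4,
    by linear_combination α ^ 2 * hα, by linear_combination α ^ 2 * hα⟩
  obtain ⟨e, y, rfl⟩ := exists_eq_unitElt_mul_sq hα hK (u := u) (v := v) rfl rfl x
  have hval : ((unitElt u v e : (𝓞 K)ˣ) : 𝓞 K) = selmerElt α (e.1, e.2.1, e.2.2, false) := by
    obtain ⟨e₁, e₂, e₃⟩ := e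
    cases e₁ <;> cases e₂ <;> cases e₃ <;> simp [unitElt, selmerElt, u, v]
    ring
  have hval' : selmerElt α (e.1, e.2.1, e.2.2, true) =
      π * selmerElt α (e.1, e.2.1, e.2.2, false) := by
    simp [selmerElt, π]; ring
  rw [← ht, Units.val_mul, hval, Units.val_pow_eq_pow_val]
  rcases Nat.even_or_odd' m with ⟨l, rfl | rfl⟩
  · exact ⟨_, π ^ l * t * y, by ring⟩
  · exact ⟨_, π ^ l * t * y, by rw [hval']; ring⟩
end

/-- `π` is a fifth root of `2` and a uniformizer of a local domain with residue field `𝔽₂`. -/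
structure IsDyadicUniformizer {W : Type*} [CommRing W] (π : W) : Prop where
  pow_five : π ^ 5 = 2
  ne_zero : π ≠ 0
  not_dvd_one : ¬ π ∣ 1
  residue : ∀ x, π ∣ x ∨ π ∣ x - 1
  isUnit : ∀ x, π ∣ x - 1 → IsUnit x

namespace IsDyadicUniformizer

section
variable {W : Type*} [CommRing W] {π : W}

lemma dvd_of_dvd_sq (hπ : IsDyadicUniformizer π) {x : W} (h : π ∣ x ^ 2) : π ∣ x := by
  refine (hπ.residue x).resolve_right fun h1 => hπ.not_dvd_one ?_
  obtain ⟨y, hy⟩ := h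
  obtain ⟨z, hz⟩ := h1
  exact ⟨y - (x + 1) * z, by linear_combination hy - (x + 1) * hz⟩

lemma isUnit_selmerElt (hπ : IsDyadicUniformizer π) (e : Bool × Bool × Bool × Bool) :
    IsUnit (selmerElt π e) := by
  have h2 := hπ.pow_five
  obtain ⟨e₁, e₂, e₃, e₄⟩ := e
  refine IsUnit.mul (IsUnit.mul ?_ ?_) (IsUnit.mul ?_ ?_)
  · cases e₁ <;> simp
  · cases e₂
    · simp
    · exact hπ.isUnit _ ⟨1 - π ^ 4, by simp only [cond_true]; linear_combination h2⟩
  · cases e₃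
    · simp
    · exact hπ.isUnit _ ⟨1 + π ^ 2, by simp only [cond_true]; ring⟩
  · cases e₄
    · simp
    · exact hπ.isUnit _ ⟨π, by simp only [cond_true]; ring⟩

variable [IsDomain W]

lemma two_dvd_of_mul_add (hπ : IsDyadicUniformizer π) {x m ω : W}
    (h : x * (x + 2 * m) = 4 * ω) : 2 ∣ x := by
  have h2 := hπ.pow_five
  have h0 := hπ.ne_zero
  obtain ⟨x, rfl⟩ := hπ.dvd_of_dvd_sq (x := x) ⟨π ^ 4 * (2 * ω - m * x), by
    linear_combination h + (m * x - 2 * ω) * h2⟩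
  obtain ⟨x, rfl⟩ := hπ.dvd_of_dvd_sq (x := x) ⟨π ^ 2 * (2 * ω - m * (π * x)), by
    apply mul_left_cancel₀ (pow_ne_zero 2 h0)
    linear_combination h + (2 * m * (π * x) - 4 * ω - (m * (π * x) - 2 * ω)) * h2⟩
  obtain ⟨x, rfl⟩ := hπ.dvd_of_dvd_sq (x := x) ⟨2 * ω - m * (π ^ 2 * x), by
    apply mul_left_cancel₀ (pow_ne_zero 4 h0)
    linear_combination h + (m * (π ^ 2 * x) - 2 * ω) * h2⟩
  obtain ⟨x, rfl⟩ := hπ.dvd_of_dvd_sq (x := x) ⟨π ^ 3 * ω - m * π * x, by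
    apply mul_left_cancel₀ (pow_ne_zero 6 h0)
    linear_combination h + (m * (π ^ 3 * x) - (π ^ 5 + 2) * ω) * h2⟩
  obtain ⟨x, rfl⟩ := hπ.dvd_of_dvd_sq (x := x) ⟨π * ω - m * x, by
    apply mul_left_cancel₀ (pow_ne_zero 8 h0)
    linear_combination h + (m * (π ^ 4 * x) - (π ^ 5 + 2) * ω) * h2⟩
  exact ⟨x, by linear_combination x * h2⟩

lemma exists_root_of_sq_eq (hπ : IsDyadicUniformizer π) {y m ω : W}
    (h : y ^ 2 = m ^ 2 + 4 * ω) (hω : π ∣ ω) (hm : π ∣ m - 1) :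
    ∃ κ, π ∣ κ ∧ κ ^ 2 + m * κ = ω := by
  have h2 := hπ.pow_five
  have h20 : (2 : W) ≠ 0 := h2 ▸ pow_ne_zero 5 hπ.ne_zero
  obtain ⟨κ, hκ⟩ := hπ.two_dvd_of_mul_add (x := y - m) (m := m) (ω := ω)
    (by linear_combination h)
  have hroot : κ ^ 2 + m * κ = ω := by
    apply mul_left_cancel₀ (pow_ne_zero 2 h20)
    linear_combination h - (y + m + 2 * κ) * hκ - 2 * m * hκ + 2 * m * hκ
  obtain ⟨r, hr⟩ := hω
  obtain ⟨s, hs⟩ := hm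
  rcases hπ.residue κ with hκ' | ⟨t, ht⟩
  · exact ⟨κ, hκ', hroot⟩
  · exact ⟨-m - κ, ⟨-s - t - π ^ 4, by linear_combination -hs - ht + h2⟩,
      by linear_combination hroot⟩

lemma selmerElt_eq_of_mul_sq (hπ : IsDyadicUniformizer π) {e f : Bool × Bool × Bool × Bool}
    {t w ν : W} (hw : IsUnit w)
    (h : selmerElt π e * t ^ 2 = selmerElt π f * w ^ 2 * (1 + π ^ 11 * ν)) : e = f := by
  obtain ⟨s, hs⟩ := selmerElt_mul (π := π) e f
  obtain ⟨i, hi⟩ := ((hπ.isUnit_selmerElt f).mul hw).exists_right_inv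
  have := selmerElt_independent hπ.pow_five hπ.ne_zero hπ.not_dvd_one hπ.residue (z := s * t * i)
    (e := (xor e.1 f.1, xor e.2.1 f.2.1, xor e.2.2.1 f.2.2.1, xor e.2.2.2 f.2.2.2)) ⟨ν, by
      linear_combination selmerElt π f * i ^ 2 * h - t ^ 2 * i ^ 2 * hs +
        (selmerElt π f * w * i + 1) * (1 + π ^ 11 * ν) * hi⟩
  simp only [Prod.mk.injEq, bne_eq_false_iff_eq] at this
  exact Prod.ext this.1 (Prod.ext this.2.1 (Prod.ext this.2.2.1 this.2.2.2))

end

end IsDyadicUniformizer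

section
variable {K : Type*} [Field K] [NumberField K] {α : 𝓞 K}
  {W : Type*} [CommRing W] [Algebra (𝓞 K) W]

lemma isDyadicUniformizer_of_isLocalization (hα : α ^ 5 = 2) (hK : finrank ℚ K = 5)
    [(Ideal.span {α}).IsPrime] [IsLocalization.AtPrime W (Ideal.span {α})] :
    IsDyadicUniformizer (algebraMap (𝓞 K) W α) := by
  have := IsLocalization.AtPrime.isLocalRing W (Ideal.span {α})
  have hnon : algebraMap (𝓞 K) W α ∈ nonunits W := by
    rw [mem_nonunits_iff, IsLocalization.AtPrime.isUnit_to_map_iff W (Ideal.span {α})]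
    exact fun h => h (Ideal.mem_span_singleton_self α)
  have hd1 : ¬ algebraMap (𝓞 K) W α ∣ 1 := fun h => hnon (isUnit_of_dvd_one h)
  refine ⟨by rw [← map_pow, hα, map_ofNat], ?_, hd1, ?_, ?_⟩
  · intro h0
    have hinj := IsLocalization.injective W (Ideal.span {α}).primeCompl_le_nonZeroDivisors
    exact fifth_root_ne_zero hα (hinj (h0.trans (map_zero _).symm))
  · intro x
    obtain ⟨⟨n, s⟩, hx⟩ := IsLocalization.surj (Ideal.span {α}).primeCompl x
    have hs : IsUnit (algebraMap (𝓞 K) W s) := IsLocalization.map_units W s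
    have hs1 : α ∣ (s : 𝓞 K) - 1 := (fifth_root_dvd_or_dvd_sub_one hα hK _).resolve_left
      fun h => s.2 (Ideal.mem_span_singleton.2 h)
    rcases fifth_root_dvd_or_dvd_sub_one hα hK n with hn | hn
    · exact Or.inl (hs.dvd_mul_right.1 (hx ▸ map_dvd _ hn))
    · refine Or.inr (hs.dvd_mul_right.1 ?_)
      have := map_dvd (algebraMap (𝓞 K) W) (dvd_sub hn hs1)
      convert this using 1
      rw [map_sub, map_sub, map_sub, ← hx, map_one]
      ring
  · intro x hx
    by_contra hxu
    refine hd1 ?_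
    have h1 : x - 1 ∈ nonunits W := by
      obtain ⟨y, hy⟩ := hx
      rw [hy]
      exact fun h => hnon (isUnit_of_mul_isUnit_left h)
    have h2 : -(x - 1) ∈ nonunits W := fun h => h1 ((IsUnit.neg_iff _).1 h)
    exact absurd isUnit_one (by
      have := IsLocalRing.nonunits_add hxu h2
      rwa [show x + -(x - 1) = 1 by ring] at this)

lemma exists_coprime_fraction (hα : α ^ 5 = 2) (hK : finrank ℚ K = 5)
    [(Ideal.span {α}).IsPrime] [IsLocalization.AtPrime W (Ideal.span {α})] (x : W) :
    ∃ p q : 𝓞 K, IsCoprime p q ∧ IsUnit (algebraMap (𝓞 K) W q) ∧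
      x * algebraMap (𝓞 K) W q = algebraMap (𝓞 K) W p := by
  have := isPrincipalIdealRing_of_fifth_root hα hK
  have hinj := IsLocalization.injective W (Ideal.span {α}).primeCompl_le_nonZeroDivisors
  have := IsLocalization.isDomain_of_atPrime W (Ideal.span {α})
  obtain ⟨⟨n, s⟩, hx⟩ := IsLocalization.surj (Ideal.span {α}).primeCompl x
  have hs : IsUnit (algebraMap (𝓞 K) W s) := IsLocalization.map_units W s
  obtain ⟨g, hg⟩ := IsPrincipalIdealRing.principal (Ideal.span {n, (s : 𝓞 K)})
  rw [Ideal.submodule_span_eq] at hg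
  obtain ⟨p, hp⟩ : g ∣ n := by
    rw [← Ideal.mem_span_singleton, ← hg]; exact Ideal.subset_span (by simp)
  obtain ⟨q, hq⟩ : g ∣ s := by
    rw [← Ideal.mem_span_singleton, ← hg]; exact Ideal.subset_span (by simp)
  obtain ⟨a, b, hab⟩ := Ideal.mem_span_pair.1 (hg ▸ Ideal.mem_span_singleton_self g)
  have hg0 : g ≠ 0 := by
    rintro rfl
    rw [hq, zero_mul, map_zero] at hs
    exact not_isUnit_zero hs
  refine ⟨p, q, ⟨a, b, mul_left_cancel₀ hg0 ?_⟩, ?_, ?_⟩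
  · linear_combination hab - a * hp - b * hq
  · rw [hq, map_mul] at hs
    exact isUnit_of_mul_isUnit_right hs
  · apply mul_left_cancel₀ ((map_ne_zero_iff _ hinj).2 hg0)
    simp only at hx
    rw [hp, hq, map_mul, map_mul] at hx
    linear_combination hx

lemma exists_algebraMap_eq_of_sq [(Ideal.span {α}).IsPrime]
    [IsLocalization.AtPrime W (Ideal.span {α})] {x : W} {n : 𝓞 K}
    (h : x ^ 2 = algebraMap (𝓞 K) W n) : ∃ m, algebraMap (𝓞 K) W m = x ∧ n = m ^ 2 := by
  have hinj := IsLocalization.injective W (Ideal.span {α}).primeCompl_le_nonZeroDivisors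
  have := IsLocalization.isDomain_of_atPrime W (Ideal.span {α})
  obtain ⟨⟨v, s⟩, hx⟩ := IsLocalization.surj (Ideal.span {α}).primeCompl x
  simp only at hx
  have hs : algebraMap (𝓞 K) W s ≠ 0 := (IsLocalization.map_units W s).ne_zero
  obtain ⟨m, rfl⟩ : (s : 𝓞 K) ∣ v := by
    rw [← IsIntegrallyClosed.pow_dvd_pow_iff two_ne_zero]
    refine ⟨n, hinj ?_⟩
    rw [map_pow, map_mul, map_pow, ← hx, ← h]
    ring
  have hm : algebraMap (𝓞 K) W m = x := by
    apply mul_left_cancel₀ hs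
    rw [← map_mul, ← hx, mul_comm]
  exact ⟨m, hm, hinj (by rw [← h, map_pow, hm])⟩

lemma exists_eq_selmerElt_mul_sq_of_isLocalization (hα : α ^ 5 = 2) (hK : finrank ℚ K = 5)
    [(Ideal.span {α}).IsPrime] [IsLocalization.AtPrime W (Ideal.span {α})]
    {π : W} (hπα : algebraMap (𝓞 K) W α = π) (k : ℤ) (f : Bool × Bool × Bool × Bool)
    {X Y w ν : W} (hX : X ≠ 0)
    (hY : X * (1 + k * (π - 1) * X + 5 * (π - 1) ^ 2 * X ^ 2) = Y ^ 2) (hw : IsUnit w)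
    (h : 1 + k * (π - 1) * X + 5 * (π - 1) ^ 2 * X ^ 2 =
      selmerElt π f * w ^ 2 * (1 + π ^ 11 * ν)) :
    ∃ T Z, X = selmerElt π f * T ^ 2 ∧
      selmerElt π f * (1 + k * (π - 1) * X + 5 * (π - 1) ^ 2 * X ^ 2) = Z ^ 2 := by
  have hinj := IsLocalization.injective W (Ideal.span {α}).primeCompl_le_nonZeroDivisors
  have := IsLocalization.isDomain_of_atPrime W (Ideal.span {α})
  have := isIntegrallyClosed_of_isLocalization W (Ideal.span {α}).primeCompl
    (Ideal.span {α}).primeCompl_le_nonZeroDivisors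
  have hπ : IsDyadicUniformizer π := hπα ▸ isDyadicUniformizer_of_isLocalization hα hK
  have hδ : IsUnit (α - 1) :=
    IsUnit.of_mul_eq_one (1 + α + α ^ 2 + α ^ 3 + α ^ 4) (by linear_combination hα)
  obtain ⟨p, q, hpq, hq, hXq⟩ := exists_coprime_fraction hα hK X
  have hp0 : p ≠ 0 := by
    rintro rfl
    rw [map_zero, mul_eq_zero] at hXq
    exact hXq.elim hX hq.ne_zero
  set C := q ^ 2 + k * (α - 1) * p * q + 5 * (α - 1) ^ 2 * p ^ 2 with hC
  have hCW : algebraMap (𝓞 K) W C = algebraMap (𝓞 K) W q ^ 2 *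
      (1 + k * (π - 1) * X + 5 * (π - 1) ^ 2 * X ^ 2) := by
    simp only [hC, map_add, map_mul, map_pow, map_sub, map_one, map_ofNat, map_intCast, ← hXq, hπα]
    ring
  obtain ⟨S, hS, hpqC⟩ := exists_algebraMap_eq_of_sq (α := α) (W := W)
    (x := algebraMap (𝓞 K) W q ^ 2 * Y) (n := p * q * C) (by
      rw [map_mul, hCW, map_mul, ← hXq]
      linear_combination -algebraMap (𝓞 K) W q ^ 4 * hY)
  have hD : 1 + k * (π - 1) * X + 5 * (π - 1) ^ 2 * X ^ 2 ≠ 0 := by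
    rw [h]
    refine mul_ne_zero (mul_ne_zero (hπ.isUnit_selmerElt f).ne_zero (pow_ne_zero 2 hw.ne_zero))
      (hπ.isUnit _ ⟨π ^ 10 * ν, by ring⟩).ne_zero
  have hS0 : S ≠ 0 := by
    rintro rfl
    rw [map_zero, eq_comm, mul_eq_zero] at hS
    refine hS.elim (pow_ne_zero 2 hq.ne_zero) fun hY0 => ?_
    rw [hY0, zero_pow two_ne_zero, mul_eq_zero] at hY
    exact hY.elim hX hD
  obtain ⟨e, t, ht⟩ := exists_eq_selmerElt_mul_sq hα hK hS0 hpqC (by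
    intro r hr hrpq hrC
    rcases hr.dvd_or_dvd hrpq with hrp | hrq
    · have hrq : r ∣ q := by
        refine hr.dvd_of_dvd_pow (n := 2) ?_
        have := dvd_sub hrC (hrp.mul_right (k * (α - 1) * q + 5 * (α - 1) ^ 2 * p))
        rwa [show C - p * (k * (α - 1) * q + 5 * (α - 1) ^ 2 * p) = q ^ 2 by rw [hC]; ring] at this
      exact absurd (hpq.isUnit_of_dvd' hrp hrq) hr.not_isUnit
    · have hrp : ¬ r ∣ p := fun hrp => hr.not_isUnit (hpq.isUnit_of_dvd' hrp hrq)
      have := dvd_sub hrC (hrq.mul_right (q + k * (α - 1) * p))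
      rw [show C - q * (q + k * (α - 1) * p) = 5 * (α - 1) ^ 2 * p ^ 2 by rw [hC]; ring] at this
      have := (hr.dvd_or_dvd this).resolve_right fun h => hrp (hr.dvd_of_dvd_pow h)
      exact (hr.dvd_or_dvd this).resolve_right fun h =>
        hr.not_isUnit (isUnit_of_dvd_unit (hr.dvd_of_dvd_pow h) hδ))
  obtain ⟨i, hi⟩ := hq.exists_right_inv
  have hSe : algebraMap (𝓞 K) W (selmerElt α e) = selmerElt π e := by
    rw [map_selmerElt, hπα]
  obtain ⟨T, hT⟩ : ∃ T, X = selmerElt π e * T ^ 2 := by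
    refine ⟨algebraMap (𝓞 K) W t * i, ?_⟩
    have := congrArg (algebraMap (𝓞 K) W) ht
    rw [map_mul, map_mul, map_pow, hSe, ← hXq] at this
    linear_combination i ^ 2 * this - X * (algebraMap (𝓞 K) W q * i + 1) * hi
  obtain ⟨j, hj⟩ := (hπ.isUnit_selmerElt e).exists_right_inv
  obtain ⟨Z, rfl⟩ : T ∣ Y := by
    rw [← IsIntegrallyClosed.pow_dvd_pow_iff two_ne_zero]
    exact ⟨selmerElt π e * (1 + k * (π - 1) * X + 5 * (π - 1) ^ 2 * X ^ 2), by
      rw [← hY]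
      nth_rewrite 1 [hT]
      ring⟩
  have hT0 : T ≠ 0 := by
    rintro rfl
    exact hX (by rw [hT]; ring)
  have hZ : selmerElt π e * (1 + k * (π - 1) * X + 5 * (π - 1) ^ 2 * X ^ 2) = Z ^ 2 := by
    apply mul_left_cancel₀ (pow_ne_zero 2 hT0)
    rw [← mul_pow, ← hY]
    nth_rewrite 3 [hT]
    ring
  have hef := hπ.selmerElt_eq_of_mul_sq (e := e) (f := f) (t := Z) (w := selmerElt π e * w) (ν := ν)
    ((hπ.isUnit_selmerElt e).mul hw) (by rw [← hZ, h]; ring)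
  subst hef
  exact ⟨T, Z, hT, hZ⟩
end

/-- If `X * (1 + k δ X + 5 δ² X²)` is a square, with `δ = π - 1`, and the second factor has the
local square class of `selmerElt π f`, then so do both factors globally. -/
def HasSelmerDescent {W : Type*} [CommRing W] (π : W) : Prop :=
  ∀ (k : ℤ) (f : Bool × Bool × Bool × Bool) (X Y w ν : W), X ≠ 0 →
    X * (1 + k * (π - 1) * X + 5 * (π - 1) ^ 2 * X ^ 2) = Y ^ 2 → IsUnit w →
    1 + k * (π - 1) * X + 5 * (π - 1) ^ 2 * X ^ 2 = selmerElt π f * w ^ 2 * (1 + π ^ 11 * ν) →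
    ∃ T Z, X = selmerElt π f * T ^ 2 ∧
      selmerElt π f * (1 + k * (π - 1) * X + 5 * (π - 1) ^ 2 * X ^ 2) = Z ^ 2

namespace IsDyadicUniformizer

section
variable {W : Type*} [CommRing W] {π : W}

lemma pow_nine_dvd_sub_of_base (hπ : IsDyadicUniformizer π) {τ κ : W} (hτ : π ^ 9 ∣ τ - 1)
    (h : κ * (1 - 5 * (π - 1) * (π ^ 2 * κ) + 5 * (π - 1) ^ 2 * (π ^ 2 * κ) ^ 2) =
      τ * (1 - 5 * (π - 1) ^ 2 * (π ^ 2 * κ) ^ 2) ^ 2) :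
    π ^ 9 ∣ κ - (1 + 2 * π - π ^ 2 - π ^ 3 + π ^ 4) := by
  have h2 := hπ.pow_five
  obtain ⟨t, ht⟩ := hτ
  obtain ⟨k, hk⟩ : ∃ k, k = 1 + 2 * π - π ^ 2 - π ^ 3 + π ^ 4 := ⟨_, rfl⟩
  rw [← hk]
  have hk0 : k * (1 - 5 * (π - 1) * (π ^ 2 * k) + 5 * (π - 1) ^ 2 * (π ^ 2 * k) ^ 2) -
      (1 - 5 * (π - 1) ^ 2 * (π ^ 2 * k) ^ 2) ^ 2 = π ^ 9 * (7933 - 21205 * π + 6843 * π ^ 2 -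
        739 * π ^ 3 + 4891 * π ^ 4) := by
    rw [hk]
    linear_combination (-1 * π - 2 * π ^ 2 - 7 * π ^ 3 - 3 * π ^ 4 + 17 * π ^ 6 + 59 * π ^ 7 -
      51 * π ^ 8 + 3905 * π ^ 9 - 10560 * π ^ 10 + 3110 * π ^ 11 - 125 * π ^ 12 + 3855 * π ^ 13 +
      600 * π ^ 14 - 8050 * π ^ 15 + 5500 * π ^ 16 + 2050 * π ^ 17 - 4150 * π ^ 18 + 1500 * π ^ 19 +
      500 * π ^ 20 - 600 * π ^ 21 + 200 * π ^ 22 - 25 * π ^ 23) * h2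
  refine (hπ.isUnit (1 - 5 * (π - 1) * π ^ 2 * (κ + k) +
    5 * (π - 1) ^ 2 * π ^ 4 * (κ ^ 2 + κ * k + k ^ 2) +
    5 * (π - 1) ^ 2 * π ^ 4 * (κ + k) *
      (2 - 5 * (π - 1) ^ 2 * π ^ 4 * (κ ^ 2 + k ^ 2))) ⟨-5 * (π - 1) * π * (κ + k) +
    5 * (π - 1) ^ 2 * π ^ 3 * (κ ^ 2 + κ * k + k ^ 2) +
    5 * (π - 1) ^ 2 * π ^ 3 * (κ + k) *
      (2 - 5 * (π - 1) ^ 2 * π ^ 4 * (κ ^ 2 + k ^ 2)), by ring⟩).dvd_mul_right.1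
    ⟨t * (1 - 5 * (π - 1) ^ 2 * (π ^ 2 * κ) ^ 2) ^ 2 - (7933 - 21205 * π + 6843 * π ^ 2 -
      739 * π ^ 3 + 4891 * π ^ 4), ?_⟩
  linear_combination h - hk0 + (1 - 5 * (π - 1) ^ 2 * (π ^ 2 * κ) ^ 2) ^ 2 * ht

variable [IsDomain W]

lemma exists_half (hπ : IsDyadicUniformizer π) (hd : HasSelmerDescent π) {j : ℕ} {τ Y : W}
    (hτ : π ∣ τ - 1)
    (hY : 4 ^ (j + 1) * π ^ 2 * τ * (1 - 5 * (π - 1) * (4 ^ (j + 1) * π ^ 2 * τ) +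
      5 * (π - 1) ^ 2 * (4 ^ (j + 1) * π ^ 2 * τ) ^ 2) = Y ^ 2) :
    ∃ κ V, κ * (1 - 5 * (π - 1) * (4 ^ j * π ^ 2 * κ) +
        5 * (π - 1) ^ 2 * (4 ^ j * π ^ 2 * κ) ^ 2) =
        τ * (1 - 5 * (π - 1) ^ 2 * (4 ^ j * π ^ 2 * κ) ^ 2) ^ 2 ∧
      4 ^ j * π ^ 2 * κ * (1 - 5 * (π - 1) * (4 ^ j * π ^ 2 * κ) +
        5 * (π - 1) ^ 2 * (4 ^ j * π ^ 2 * κ) ^ 2) = V ^ 2 := by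
  have h2 := hπ.pow_five
  have h0 := hπ.ne_zero
  have h20 : (2 : W) ≠ 0 := h2 ▸ pow_ne_zero 5 h0
  have h40 : (4 : W) ≠ 0 := by
    rw [show (4 : W) = 2 ^ 2 by norm_num]; exact pow_ne_zero 2 h20
  have h4 : π ^ 10 = 4 := by linear_combination (π ^ 5 + 2) * h2
  have hone : selmerElt π (false, false, false, false) = 1 := by simp [selmerElt]
  obtain ⟨μ, hμ⟩ : ∃ μ, μ = 4 ^ j * π ^ 2 * τ := ⟨_, rfl⟩
  have hμ0 : μ ≠ 0 := by
    rw [hμ]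
    exact mul_ne_zero (mul_ne_zero (pow_ne_zero _ h40) (pow_ne_zero _ h0)) (hπ.isUnit _ hτ).ne_zero
  have hξ : 4 ^ (j + 1) * π ^ 2 * τ = 4 * μ := by rw [hμ]; ring
  rw [hξ] at hY
  have hμπ : μ = π * (4 ^ j * π * τ) := by rw [hμ]; ring
  obtain ⟨T, θ, hT, hθ⟩ := hd (-5) (false, false, false, false) (4 * μ) Y 1
    (4 ^ j * π * τ * (-5 * (π - 1) + 5 * (π - 1) ^ 2 * (4 * μ))) (mul_ne_zero h40 hμ0)
    (by push_cast; linear_combination hY) isUnit_one (by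
      rw [hone]
      push_cast
      linear_combination (4 * (-5 * (π - 1) + 5 * (π - 1) ^ 2 * (4 * μ))) * hμπ -
        (π * (4 ^ j * π * τ) * (-5 * (π - 1) + 5 * (π - 1) ^ 2 * (4 * μ))) * h4)
  rw [hone] at hT hθ
  push_cast at hθ
  obtain ⟨ε, ⟨ε', hε'⟩, hε⟩ := hπ.exists_root_of_sq_eq (y := θ) (m := 1)
    (ω := μ * (-5 * (π - 1) + 4 * (5 * (π - 1) ^ 2) * μ)) (by linear_combination -hθ)
    (Dvd.dvd.mul_right ⟨_, hμπ⟩ _) (by simp)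
  obtain ⟨T, rfl⟩ := hπ.two_dvd_of_mul_add (x := T) (m := 0) (ω := μ) (by linear_combination -hT)
  have hμT : μ = T ^ 2 := mul_left_cancel₀ h40 (by linear_combination hT)
  obtain ⟨i, hi⟩ := (hπ.isUnit (1 + ε - 5 * (π - 1) * μ)
    ⟨ε' - 5 * (π - 1) * (4 ^ j * π * τ), by
      linear_combination hε' - 5 * (π - 1) * hμπ⟩).exists_right_inv
  have hD : 1 - 2 * (-5 * (π - 1)) * (μ * i) + 5 * (π - 1) ^ 2 * (μ * i) ^ 2 = i := by
    linear_combination i ^ 2 * hε + (-((1 + ε - 5 * (π - 1) * μ) * i + 1) -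
      10 * (π - 1) * μ * i + i) * hi
  obtain ⟨m, hm⟩ : ∃ m, m = 1 + 5 * (π - 1) * (μ * i) := ⟨_, rfl⟩
  have hm1 : π ∣ m - 1 := ⟨5 * (π - 1) * (4 ^ j * π * τ * i), by
    linear_combination hm + 5 * (π - 1) * i * hμπ⟩
  obtain ⟨n, hn⟩ := (hπ.isUnit m hm1).exists_right_inv
  have hi0 : i ≠ 0 := right_ne_zero_of_mul (hi ▸ one_ne_zero)
  obtain ⟨S, θ', hS, hθ'⟩ := hd 10 (false, false, false, false) (μ * i) (T * i) m
    (-(π * (5 * (π - 1) ^ 2 * (4 ^ j * π * τ * i) ^ 2) * n ^ 2)) (mul_ne_zero hμ0 hi0)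
    (by push_cast; linear_combination μ * i * hD + i ^ 2 * hμT) (hπ.isUnit m hm1) (by
      rw [hone]
      push_cast
      linear_combination -(m + 1 + 5 * (π - 1) * (μ * i)) * hm -
        20 * (π - 1) ^ 2 * i ^ 2 * (μ + π * (4 ^ j * π * τ)) * hμπ +
        5 * (π - 1) ^ 2 * i ^ 2 * π ^ 2 * (4 ^ j * π * τ) ^ 2 * h4 +
        5 * (π - 1) ^ 2 * i ^ 2 * π ^ 12 * (4 ^ j * π * τ) ^ 2 * (m * n + 1) * hn)
  rw [hone] at hS hθ'
  push_cast at hθ'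
  obtain ⟨κ', ⟨κ'', hκ''⟩, hκ'⟩ := hπ.exists_root_of_sq_eq (y := θ') (m := m)
    (ω := -(5 * (π - 1) ^ 2 * (μ * i) ^ 2)) (by
      rw [hm]; linear_combination -hθ') ⟨-(5 * (π - 1) ^ 2 * (μ * i) * (4 ^ j * π * τ * i)), by
        linear_combination -(5 * (π - 1) ^ 2 * (μ * i) * i) * hμπ⟩ hm1
  obtain ⟨m', hm'⟩ := hm1
  obtain ⟨l, hl⟩ := (hπ.isUnit (m + κ')
    ⟨m' + κ'', by linear_combination hm' + hκ''⟩).exists_right_inv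
  have hl0 : l ≠ 0 := right_ne_zero_of_mul (hl ▸ one_ne_zero)
  have hq : 4 ^ j * π ^ 2 * (τ * i * l) = μ * i * l := by rw [hμ]; ring
  have hlq : 1 - 5 * (π - 1) * (μ * i * l) + 5 * (π - 1) ^ 2 * (μ * i * l) ^ 2 = l := by
    linear_combination l ^ 2 * hκ' + l ^ 2 * (m + κ') * hm +
      (-((m + κ') * l + 1) + 5 * (π - 1) * μ * i * l + l) * hl
  refine ⟨τ * i * l, S * l, ?_, ?_⟩
  · rw [hq, hlq]
    linear_combination -τ * l ^ 2 * hD - τ * (l + 1 + 5 * (π - 1) * (μ * i * l) +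
      5 * (π - 1) ^ 2 * (μ * i * l) ^ 2) * hlq
  · rw [hq, hlq]
    linear_combination l ^ 2 * hS

lemma base_false (hπ : IsDyadicUniformizer π) (hd : HasSelmerDescent π) (φ : W →+* ℝ)
    (hφ : Function.Injective φ) {τ κ V : W} (hτ : π ^ 9 ∣ τ - 1)
    (h : κ * (1 - 5 * (π - 1) * (π ^ 2 * κ) + 5 * (π - 1) ^ 2 * (π ^ 2 * κ) ^ 2) =
      τ * (1 - 5 * (π - 1) ^ 2 * (π ^ 2 * κ) ^ 2) ^ 2)
    (hV : π ^ 2 * κ * (1 - 5 * (π - 1) * (π ^ 2 * κ) + 5 * (π - 1) ^ 2 * (π ^ 2 * κ) ^ 2) =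
      V ^ 2) : False := by
  have h2 := hπ.pow_five
  obtain ⟨s, hs⟩ := hπ.pow_nine_dvd_sub_of_base hτ h
  obtain ⟨k, hk⟩ : ∃ k, k = 1 + 2 * π - π ^ 2 - π ^ 3 + π ^ 4 := ⟨_, rfl⟩
  rw [← hk] at hs
  have hκ0 : κ ≠ 0 := (hπ.isUnit κ ⟨2 - π - π ^ 2 + π ^ 3 + π ^ 8 * s, by
    linear_combination hs + hk⟩).ne_zero
  have hl : 1 - 5 * (π - 1) * (π ^ 2 * k) + 5 * (π - 1) ^ 2 * (π ^ 2 * k) ^ 2 =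
      -(π - 1) * (1 + π + π ^ 3) * (1 + π ^ 2) ^ 2 + π ^ 11 * (24 + 3 * π + 14 * π ^ 2 + 8 * π ^ 3 -
        33 * π ^ 4) := by
    rw [hk]
    linear_combination (-2 * π ^ 2 - 2 * π ^ 3 + 4 * π ^ 4 - 4 * π ^ 5 + 6 * π ^ 6 + 17 * π ^ 7 -
      34 * π ^ 8 - 3 * π ^ 9 + 33 * π ^ 10) * h2
  have hS : selmerElt π (true, true, true, false) = -(π - 1) * (1 + π + π ^ 3) := by
    simp [selmerElt]
  have hw : IsUnit (1 + π ^ 2) := hπ.isUnit _ ⟨π, by ring⟩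
  obtain ⟨i, hi⟩ := ((hπ.isUnit_selmerElt (true, true, true, false)).mul
    (hw.pow 2)).exists_right_inv
  rw [hS] at hi
  have hq0 : π ^ 2 * κ ≠ 0 := mul_ne_zero (pow_ne_zero 2 hπ.ne_zero) hκ0
  obtain ⟨T, -, hT, -⟩ := hd (-5) (true, true, true, false) (π ^ 2 * κ) V (1 + π ^ 2)
    (i * ((24 + 3 * π + 14 * π ^ 2 + 8 * π ^ 3 - 33 * π ^ 4) + s * (-5 * (π - 1) + 5 * (π -
      1) ^ 2 * π ^ 2 * (κ + k)))) hq0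
    (by push_cast; linear_combination hV) hw (by
      rw [hS]
      push_cast
      linear_combination hl + π ^ 2 * (-5 * (π - 1) + 5 * (π - 1) ^ 2 * π ^ 2 * (κ + k)) * hs -
        π ^ 11 * ((24 + 3 * π + 14 * π ^ 2 + 8 * π ^ 3 - 33 * π ^ 4) + s * (-5 * (π - 1) + 5 * (π -
          1) ^ 2 * π ^ 2 * (κ + k))) * hi)
  rw [hS] at hT
  have hp1 : 1 < φ π := by
    have : φ π ^ 5 = 2 := by rw [← map_pow, h2, map_ofNat]
    by_contra! hle
    have hnn : 0 ≤ φ π := by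
      by_contra! hneg
      have := Odd.pow_neg (n := 5) (by decide) hneg
      linarith
    have := pow_le_one₀ (n := 5) hnn hle
    linarith
  have hqφ : φ (π ^ 2 * κ) < 0 := by
    refine lt_of_le_of_ne ?_ ((map_ne_zero_iff φ hφ).2 hq0)
    rw [hT]
    simp only [map_mul, map_neg, map_sub, map_add, map_one, map_pow]
    have : 0 ≤ (φ π - 1) * (1 + φ π + φ π ^ 3) * φ T ^ 2 := by
      have : 0 < φ π - 1 := by linarith
      positivity
    linarith
  have hVφ := congrArg φ hV
  rw [map_mul] at hVφ
  set q := φ (π ^ 2 * κ)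
  simp only [map_mul, map_sub, map_add, map_one, map_pow, map_ofNat] at hVφ
  have hqd : φ π ^ 2 * φ κ = q := by simp [q]
  rw [hqd] at hVφ
  have h1 : 0 < (φ π - 1) * (-q) := mul_pos (by linarith) (by linarith)
  nlinarith [sq_nonneg (φ V), mul_pos h1 h1, mul_pos (neg_pos.2 hqφ) (mul_pos h1 h1),
    mul_pos (neg_pos.2 hqφ) h1]

lemma pow_four_mul_false (hπ : IsDyadicUniformizer π) (hd : HasSelmerDescent π) (φ : W →+* ℝ)
    (hφ : Function.Injective φ) (j : ℕ) {τ Y : W} (hτ : π ^ 9 ∣ τ - 1)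
    (hY : 4 ^ (j + 1) * π ^ 2 * τ * (1 - 5 * (π - 1) * (4 ^ (j + 1) * π ^ 2 * τ) +
      5 * (π - 1) ^ 2 * (4 ^ (j + 1) * π ^ 2 * τ) ^ 2) = Y ^ 2) : False := by
  have h4 : π ^ 10 = 4 := by linear_combination (π ^ 5 + 2) * hπ.pow_five
  induction j generalizing τ Y with
  | zero =>
    obtain ⟨κ, V, hκ, hV⟩ := hπ.exists_half hd ((dvd_pow_self π (by norm_num)).trans hτ) hY
    rw [pow_zero, one_mul] at hκ hV
    exact hπ.base_false hd φ hφ hτ hκ hV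
  | succ j ih =>
    obtain ⟨κ, V, hκ, hV⟩ := hπ.exists_half hd ((dvd_pow_self π (by norm_num)).trans hτ) hY
    refine ih ?_ hV
    obtain ⟨t, ht⟩ := hτ
    obtain ⟨q, hq⟩ : ∃ q, q = 4 ^ j * π ^ 3 * κ := ⟨_, rfl⟩
    have hq' : 4 ^ (j + 1) * π ^ 2 * κ = π ^ 9 * q := by
      rw [hq, pow_succ]
      linear_combination -4 ^ j * π ^ 2 * κ * h4
    rw [hq'] at hκ
    exact ⟨t * (1 - 5 * (π - 1) ^ 2 * (π ^ 9 * q) ^ 2) ^ 2 +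
      5 * (π - 1) ^ 2 * π ^ 9 * q ^ 2 * (5 * (π - 1) ^ 2 * (π ^ 9 * q) ^ 2 - 2) -
      κ * (-5 * (π - 1) * q + 5 * (π - 1) ^ 2 * π ^ 9 * q ^ 2), by
        linear_combination hκ + (1 - 5 * (π - 1) ^ 2 * (π ^ 9 * q) ^ 2) ^ 2 * ht⟩
lemma quartic_false (hπ : IsDyadicUniformizer π) (hd : HasSelmerDescent π) (φ : W →+* ℝ)
    (hφ : Function.Injective φ) {c d o x z : W} (j : ℕ) (hcd : c - d = 2 ^ (j + 3) * o)
    (ho : π ^ 9 ∣ o ^ 2 - 1) (hd1 : π ^ 9 ∣ d - 1) (hz : IsUnit z)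
    (hzd : (π - 1) * z ^ 2 = π * c - d)
    (hx : (π * c - d) * ((π * c) ^ 4 + (π * c) ^ 3 * d + (π * c) ^ 2 * d ^ 2 +
      (π * c) * d ^ 3 + d ^ 4) = x ^ 2) : False := by
  have h2 := hπ.pow_five
  have h4 : π ^ 10 = 4 := by linear_combination (π ^ 5 + 2) * h2
  obtain ⟨d', hd'⟩ := (hπ.isUnit d ((dvd_pow_self π (by norm_num)).trans hd1)).exists_right_inv
  obtain ⟨z', hz'⟩ := hz.exists_right_inv
  obtain ⟨ς', hς'⟩ : ∃ ς', ς' = 2 ^ j * o * d' := ⟨_, rfl⟩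
  obtain ⟨ς, hς⟩ : ∃ ς, ς = π * ς' := ⟨_, rfl⟩
  have hs : π * c * d' = π + 8 * ς := by
    rw [hς, hς']
    rw [pow_add] at hcd
    linear_combination π * d' * hcd + π * hd'
  obtain ⟨d₁, hd₁⟩ : ∃ d₁, d₁ = (π - 1) * (4 * π ^ 3 + 3 * π ^ 2 + 2 * π + 1) := ⟨_, rfl⟩
  obtain ⟨c₂, hc₂⟩ : ∃ c₂, c₂ = (π - 1) * (6 * π ^ 2 + 3 * π + 1) := ⟨_, rfl⟩
  obtain ⟨b₃, hb₃⟩ : ∃ b₃, b₃ = (π - 1) * (4 * π + 1) := ⟨_, rfl⟩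
  obtain ⟨e, he⟩ : ∃ e, e = (π - 1) * (2 * π ^ 2 + π + 2) := ⟨_, rfl⟩
  obtain ⟨r, hr⟩ : ∃ r, r = d₁ * ς' + 8 * c₂ * ς * ς' + 64 * b₃ * ς ^ 2 * ς' +
    512 * (π - 1) * ς ^ 3 * ς' := ⟨_, rfl⟩
  have hω : 2 * d₁ * ς + 16 * c₂ * ς ^ 2 + 128 * b₃ * ς ^ 3 + 1024 * (π - 1) * ς ^ 4 =
      π ^ 6 * r := by
    rw [hr]
    linear_combination 2 * (d₁ + 8 * c₂ * ς + 64 * b₃ * ς ^ 2 + 512 * (π - 1) * ς ^ 3) * hς -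
      π * ς' * (d₁ + 8 * c₂ * ς + 64 * b₃ * ς ^ 2 + 512 * (π - 1) * ς ^ 3) * h2
  have hy : (x * z' * d' ^ 2) ^ 2 = 1 ^ 2 + 4 * (2 * d₁ * ς + 16 * c₂ * ς ^ 2 +
      128 * b₃ * ς ^ 3 + 1024 * (π - 1) * ς ^ 4) := by
    have hx' : ((π * c) ^ 4 + (π * c) ^ 3 * d + (π * c) ^ 2 * d ^ 2 +
        (π * c) * d ^ 3 + d ^ 4) * d' ^ 4 = (π + 8 * ς) ^ 4 + (π + 8 * ς) ^ 3 +
        (π + 8 * ς) ^ 2 + (π + 8 * ς) + 1 := by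
      rw [← hs]
      linear_combination ((π * c * d') ^ 3 + (π * c * d') ^ 2 * (d * d' + 1) +
        π * c * d' * ((d * d') ^ 2 + d * d' + 1) +
        ((d * d') ^ 3 + (d * d') ^ 2 + d * d' + 1)) * hd'
    rw [hd₁, hc₂, hb₃]
    linear_combination -z' ^ 2 * d' ^ 4 * hx - z' ^ 2 * d' ^ 4 * ((π * c) ^ 4 + (π * c) ^ 3 * d +
      (π * c) ^ 2 * d ^ 2 + (π * c) * d ^ 3 + d ^ 4) * hzd +
      (π - 1) * ((π * c) ^ 4 + (π * c) ^ 3 * d + (π * c) ^ 2 * d ^ 2 +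
        (π * c) * d ^ 3 + d ^ 4) * d' ^ 4 * (z * z' + 1) * hz' + (π - 1) * hx' + h2
  obtain ⟨ε, ⟨ε', hε'⟩, hε⟩ := hπ.exists_root_of_sq_eq hy ⟨π ^ 5 * r, by rw [hω]; ring⟩ (by simp)
  obtain ⟨i, hi⟩ := (hπ.isUnit (1 + ε) ⟨ε', by linear_combination hε'⟩).exists_right_inv
  have hε6 : ε = π ^ 6 * (r * i) := by
    rw [hω] at hε
    linear_combination i * hε - ε * hi
  obtain ⟨M, hM⟩ : ∃ M, M = 1 + ε + 2 * d₁ * ς + 16 * e * ς ^ 2 := ⟨_, rfl⟩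
  obtain ⟨M', hM'⟩ : ∃ M', M - 1 = π ^ 9 * M' := by
    refine ⟨π ^ 2 * d₁ * ς' - π ^ 3 * (r * i) ^ 2 + 4 * π * (c₂ + e) * ς ^ 2 +
      32 * π * b₃ * ς ^ 3 + 256 * π * (π - 1) * ς ^ 4, ?_⟩
    linear_combination hM + hε - (ε + π ^ 6 * (r * i)) * hε6 + 4 * d₁ * hς -
      (π * d₁ * ς' + 4 * (c₂ + e) * ς ^ 2 + 32 * b₃ * ς ^ 3 + 256 * (π - 1) * ς ^ 4) * h4
  obtain ⟨n, hn⟩ := (hπ.isUnit M ⟨π ^ 8 * M', by linear_combination hM'⟩).exists_right_inv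
  have hsq : M * (M ^ 2 - 80 * (π - 1) * ς ^ 2 * M + 1280 * (π - 1) ^ 2 * ς ^ 4) =
      (1 + ε + 2 * d₁ * ς + 16 * c₂ * ς ^ 2 - 4 * d₁ ^ 2 * ς ^ 2 + 2 * d₁ * ς * M +
        64 * b₃ * ς ^ 3 - 32 * d₁ * e * ς ^ 3) ^ 2 := by
    rw [hM]
    rw [hd₁, hc₂, hb₃] at *
    rw [he]
    linear_combination (1 - 2 * ς - 2 * ς * π - 2 * ς * π ^ 2 - 2 * ς * π ^ 3 + 8 * ς * π ^ 4 -
      20 * ς ^ 2 - 40 * ς ^ 2 * π - 60 * ς ^ 2 * π ^ 2 + 80 * ς ^ 2 * π ^ 3 + 20 * ς ^ 2 * π ^ 4 +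
      24 * ς ^ 2 * π ^ 5 + 28 * ς ^ 2 * π ^ 6 + 32 * ς ^ 2 * π ^ 7 - 64 * ς ^ 2 * π ^ 8 + ε) * hε +
      (1024 * ς ^ 4 - 1024 * ς ^ 4 * π - 2048 * ς ^ 5 + 10240 * ς ^ 5 * π ^ 4 -
      8192 * ς ^ 5 * π ^ 5 - 12288 * ς ^ 6 + 8192 * ς ^ 6 * π - 12288 * ς ^ 6 * π ^ 2 +
      49152 * ς ^ 6 * π ^ 3 - 32768 * ς ^ 6 * π ^ 4 + 1024 * ε * ς ^ 4 - 1024 * ε * ς ^ 4 * π) * h2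
  have hξ : 4 ^ (j + 1 + 1) * π ^ 2 * (o ^ 2 * d' ^ 2 * n) = 16 * ς ^ 2 * n := by
    have h4j : (4 : W) ^ j = (2 ^ j) ^ 2 := by rw [← pow_mul, mul_comm, pow_mul]; norm_num
    rw [hς, hς', pow_succ, pow_succ, h4j]
    ring
  refine hπ.pow_four_mul_false hd φ hφ (j + 1) (τ := o ^ 2 * d' ^ 2 * n)
    (Y := 4 * ς * (1 + ε + 2 * d₁ * ς + 16 * c₂ * ς ^ 2 - 4 * d₁ ^ 2 * ς ^ 2 + 2 * d₁ * ς * M +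
        64 * b₃ * ς ^ 3 - 32 * d₁ * e * ς ^ 3) * n ^ 2) ?_ ?_
  · obtain ⟨u, hu⟩ := ho
    obtain ⟨v, hv⟩ := hd1
    refine ⟨u * d' ^ 2 * n - (d' + 1) * d' * v * n - n * M', ?_⟩
    linear_combination d' ^ 2 * n * hu - (d' + 1) * d' * n * hv + (d' + 1) * n * hd' -
      n * hM' + hn
  · rw [hξ]
    linear_combination 16 * ς ^ 2 * n ^ 4 * hsq - 16 * ς ^ 2 * n * (M * n * (M * n + 1) + 1 -
      80 * (π - 1) * ς ^ 2 * n * (M * n + 1) + 1280 * (π - 1) ^ 2 * ς ^ 4 * n ^ 2) * hn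
end

end IsDyadicUniformizer

lemma eq_one_of_sq_eq_zmod_eight : ∀ x₁ x₂ c d : ZMod 8, (4 * x₁ ≠ 0 ∨ 4 * x₂ ≠ 0) →
    x₂ ^ 2 = 2 * c ^ 5 - d ^ 5 → x₁ ^ 2 = 3 * c ^ 5 - 2 * d ^ 5 → c = 1 ∧ d = 1 := by
  decide +kernel

lemma eight_dvd_sub_one_of_sq_eq {x₁ x₂ c d : ℤ} (hx : IsCoprime x₁ x₂)
    (h₂ : x₂ ^ 2 = 2 * c ^ 5 - d ^ 5) (h₁ : x₁ ^ 2 = 3 * c ^ 5 - 2 * d ^ 5) :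
    8 ∣ c - 1 ∧ 8 ∣ d - 1 := by
  have hdvd (x : ℤ) (h : 4 * (x : ZMod 8) = 0) : 2 ∣ x := by
    have : ((4 * x : ℤ) : ZMod 8) = 0 := by push_cast; exact h
    rw [ZMod.intCast_zmod_eq_zero_iff_dvd] at this
    omega
  have key := eq_one_of_sq_eq_zmod_eight x₁ x₂ c d (by
    by_contra! h
    exact absurd (hx.isUnit_of_dvd' (hdvd _ h.1) (hdvd _ h.2)) (by decide))
    (by exact_mod_cast congrArg (Int.cast : ℤ → ZMod 8) h₂)
    (by exact_mod_cast congrArg (Int.cast : ℤ → ZMod 8) h₁)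
  constructor
  · have : ((c - 1 : ℤ) : ZMod 8) = 0 := by push_cast; rw [key.1, sub_self]
    exact_mod_cast (ZMod.intCast_zmod_eq_zero_iff_dvd _ 8).1 this
  · have : ((d - 1 : ℤ) : ZMod 8) = 0 := by push_cast; rw [key.2, sub_self]
    exact_mod_cast (ZMod.intCast_zmod_eq_zero_iff_dvd _ 8).1 this

section
variable {K : Type*} [Field K] [NumberField K] {α : 𝓞 K}

lemma exists_linear_factor_eq_selmerElt_mul_sq (hα : α ^ 5 = 2) (hK : finrank ℚ K = 5)
    {c d x : ℤ} (hcd : IsCoprime c d) (hd : 2 ∣ d - 1) (hx : x ≠ 0)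
    (h : x ^ 2 = 2 * c ^ 5 - d ^ 5) : ∃ e t, α * c - d = selmerElt α e * t ^ 2 := by
  refine exists_eq_selmerElt_mul_sq hα hK (B := (α * c) ^ 4 + (α * c) ^ 3 * d +
    (α * c) ^ 2 * d ^ 2 + (α * c) * d ^ 3 + d ^ 4) (S := x) (Int.cast_ne_zero.2 hx) ?_ ?_
  · have := congrArg (Int.cast : ℤ → 𝓞 K) h
    push_cast at this
    linear_combination (c : 𝓞 K) ^ 5 * hα - this
  · intro p hp hA hB
    have h5 : p ∣ 5 * (d : 𝓞 K) ^ 4 := by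
      have := dvd_sub hB (hA.mul_right ((α * c) ^ 3 + 2 * (α * c) ^ 2 * d + 3 * (α * c) * d ^ 2 +
        4 * (d : 𝓞 K) ^ 3))
      convert this using 1
      ring
    refine (hp.dvd_or_dvd h5).resolve_right fun hpd => ?_
    have hpd := hp.dvd_of_dvd_pow hpd
    have hpc : p ∣ α * c := by
      have := dvd_add hA hpd
      rwa [sub_add_cancel] at this
    rcases hp.dvd_or_dvd hpc with hpα | hpc
    · obtain ⟨k, hk⟩ := hd
      have h1 : (d : 𝓞 K) - α ^ 5 * k = 1 := by
        have := congrArg (Int.cast : ℤ → 𝓞 K) hk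
        push_cast at this
        linear_combination this - k * hα
      exact hp.not_isUnit (isUnit_of_dvd_one (h1 ▸ dvd_sub hpd
        ((hpα.trans (dvd_pow_self α (by norm_num))).mul_right _)))
    · have hcd' : IsCoprime (c : 𝓞 K) d := hcd.map (Int.castRingHom (𝓞 K))
      exact hp.not_isUnit (hcd'.isUnit_of_dvd' hpc hpd)

lemma AP_2255_false {W : Type*} [CommRing W] [Algebra (𝓞 K) W] [(Ideal.span {α}).IsPrime]
    [IsLocalization.AtPrime W (Ideal.span {α})] (hα : α ^ 5 = 2) (hK : finrank ℚ K = 5)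
    (ψ : K →+* ℝ) {x₁ x₂ c d : ℤ} (hx : IsCoprime (x₁ ^ 2) (x₂ ^ 2)) (hne : c ≠ d)
    (h₂ : x₂ ^ 2 = 2 * c ^ 5 - d ^ 5) (h₁ : x₁ ^ 2 = 3 * c ^ 5 - 2 * d ^ 5) : False := by
  obtain ⟨⟨c', hc'⟩, d', hd'⟩ := eight_dvd_sub_one_of_sq_eq
    ((IsCoprime.pow_iff two_pos two_pos).1 hx) h₂ h₁
  have hcd : IsCoprime c d := by
    obtain ⟨u, v, huv⟩ := hx
    exact ⟨c ^ 4 * (3 * u + 2 * v), -d ^ 4 * (2 * u + v), by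
      linear_combination huv - u * h₁ - v * h₂⟩
  have hx₂ : x₂ ≠ 0 := by
    rintro rfl
    have hodd : Odd (2 * c ^ 5 - d ^ 5) := by
      have : Odd d := ⟨4 * d', by omega⟩
      exact Even.sub_odd ⟨c ^ 5, by ring⟩ this.pow
    rw [← h₂] at hodd
    exact absurd hodd (by decide)
  obtain ⟨e, t, ht⟩ := exists_linear_factor_eq_selmerElt_mul_sq hα hK hcd
    (hd' ▸ ⟨4 * d', by ring⟩) hx₂ h₂
  have hinj := IsLocalization.injective W (Ideal.span {α}).primeCompl_le_nonZeroDivisors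
  have := IsLocalization.isDomain_of_atPrime W (Ideal.span {α})
  have hπ : IsDyadicUniformizer (algebraMap (𝓞 K) W α) :=
    isDyadicUniformizer_of_isLocalization hα hK
  have hd : HasSelmerDescent (algebraMap (𝓞 K) W α) := fun k f X Y w ν hX hY hw h =>
    exists_eq_selmerElt_mul_sq_of_isLocalization hα hK rfl k f hX hY hw h
  have hψ : Function.Injective (ψ.comp (algebraMap (𝓞 K) K)) :=
    ψ.injective.comp (FaithfulSMul.algebraMap_injective _ _)
  have hunit (y : (Ideal.span {α}).primeCompl) : IsUnit (ψ.comp (algebraMap (𝓞 K) K) y) := by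
    refine ((map_ne_zero_iff _ hψ).2 ?_).isUnit
    intro h0
    exact y.2 (h0 ▸ Ideal.zero_mem _)
  let φ : W →+* ℝ := IsLocalization.lift (S := W) hunit
  have hφ : Function.Injective φ := (IsLocalization.lift_injective_iff hunit).2 fun x y =>
    hinj.eq_iff.trans hψ.eq_iff.symm
  have h2 := hπ.pow_five
  have htW := congrArg (algebraMap (𝓞 K) W) ht
  simp only [map_sub, map_mul, map_pow, map_intCast, map_selmerElt] at htW
  obtain ⟨π, hπα⟩ : ∃ π, π = algebraMap (𝓞 K) W α := ⟨_, rfl⟩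
  rw [← hπα] at hπ hd h2 htW
  have h8 : π ^ 15 = 8 := by linear_combination (π ^ 10 + 2 * π ^ 5 + 4) * h2
  have hcW : (c : W) - 1 = 8 * c' := by exact_mod_cast congrArg (Int.cast : ℤ → W) hc'
  have hdW : (d : W) - 1 = 8 * d' := by exact_mod_cast congrArg (Int.cast : ℤ → W) hd'
  have hδ : (π - 1) * (1 + π + π ^ 2 + π ^ 3 + π ^ 4) = 1 := by linear_combination h2
  have he := hπ.selmerElt_eq_of_mul_sq (e := e) (f := (false, true, false, false))
    (t := algebraMap (𝓞 K) W t) (w := 1)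
    (ν := π ^ 4 * (π * c' - d') * (1 + π + π ^ 2 + π ^ 3 + π ^ 4)) isUnit_one (by
      rw [← htW]
      simp only [selmerElt, cond_true, cond_false]
      linear_combination π * hcW - hdW - (π * c' - d') * h8 - π ^ 15 * (π * c' - d') * hδ)
  subst he
  have hz : (π - 1) * algebraMap (𝓞 K) W t ^ 2 = π * c - d := by
    rw [htW]
    simp [selmerElt]
  have hzu : IsUnit (algebraMap (𝓞 K) W t) := by
    have : IsUnit (π * (c : W) - d) := hπ.isUnit _ ⟨c - π ^ 4 - π ^ 14 * d', by
      linear_combination -hdW + h2 + d' * h8⟩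
    rw [← hz] at this
    exact (isUnit_pow_iff two_ne_zero).1 (isUnit_of_mul_isUnit_right this)
  obtain ⟨j, o, ho, hm⟩ := WfDvdMonoid.max_power_factor (a₀ := c' - d') (x := (2 : ℤ))
    (fun h => hne (by linarith)) Int.prime_two.irreducible
  obtain ⟨u, hu⟩ : (8 : ℤ) ∣ o ^ 2 - 1 := Int.eight_dvd_sq_sub_one_of_odd (by
    rwa [← Int.not_even_iff_odd, even_iff_two_dvd])
  have huW : (o : W) ^ 2 - 1 = 8 * u := by exact_mod_cast congrArg (Int.cast : ℤ → W) hu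
  have hmW : (c' : W) - d' = 2 ^ j * o := by exact_mod_cast congrArg (Int.cast : ℤ → W) hm
  refine hπ.quartic_false hd φ hφ (c := c) (d := d) (o := o) (x := x₂) j ?_
    ⟨π ^ 6 * u, by linear_combination huW - u * h8⟩
    ⟨π ^ 6 * d', by linear_combination hdW - d' * h8⟩
    hzu hz ?_
  · rw [pow_add]
    linear_combination hcW - hdW + 8 * hmW
  · have := congrArg (Int.cast : ℤ → W) h₂
    push_cast at this
    linear_combination (c : W) ^ 5 * h2 - this
end

/-- There is no primitive non-constant arithmetic progression of integers of the
form `x₁², x₂², x₃⁵, x₄⁵`. -/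
theorem no_AP_2255 :
    ¬ ∃ (x₁ x₂ x₃ x₄ d : ℤ), d ≠ 0 ∧
      Int.gcd (x₁ ^ 2) (x₂ ^ 2) = 1 ∧
      x₂ ^ 2 - x₁ ^ 2 = d ∧
      x₃ ^ 5 - x₂ ^ 2 = d ∧
      x₄ ^ 5 - x₃ ^ 5 = d := by
  rintro ⟨x₁, x₂, c, e, d, hd, hgcd, h₁, h₂, h₃⟩
  obtain ⟨a, ha⟩ : ∃ a : ℝ, a ^ 5 = 2 := ⟨2 ^ (5 : ℝ)⁻¹, by
    rw [← Real.rpow_natCast, ← Real.rpow_mul (by norm_num)]; norm_num⟩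
  have hirr : Irreducible (X ^ 5 - C 2 : ℚ[X]) :=
    X_pow_sub_C_irreducible_of_prime Nat.prime_five fun b => by
      simpa using rat_pow_five_ne_two_pow (n := 1) (by norm_num) b
  have hmin : X ^ 5 - C 2 = minpoly ℚ a := minpoly.eq_of_irreducible_of_monic hirr
    (by simp [ha]) (monic_X_pow_sub_C 2 (by norm_num))
  have hint : IsIntegral ℚ a := ⟨_, monic_X_pow_sub_C 2 (by norm_num : (5 : ℕ) ≠ 0), by simp [ha]⟩
  have hfin : FiniteDimensional ℚ (IntermediateField.adjoin ℚ {a}) :=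
    IntermediateField.adjoin.finiteDimensional hint
  have hK : finrank ℚ (IntermediateField.adjoin ℚ {a}) = 5 := by
    rw [IntermediateField.adjoin.finrank hint, ← hmin, natDegree_X_pow_sub_C]
  have : NumberField (IntermediateField.adjoin ℚ {a}) := ⟨⟩
  let b : IntermediateField.adjoin ℚ {a} := ⟨a, IntermediateField.mem_adjoin_simple_self ℚ a⟩
  have hb : b ^ 5 = 2 := Subtype.ext ha
  let α : 𝓞 (IntermediateField.adjoin ℚ {a}) :=
    ⟨b, X ^ 5 - C 2, monic_X_pow_sub_C 2 (by norm_num), by simp [hb]⟩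
  have hα : α ^ 5 = 2 := RingOfIntegers.ext hb
  have : (Ideal.span {α}).IsPrime :=
    (Ideal.span_singleton_prime (fifth_root_ne_zero hα)).2 (prime_fifth_root hα hK)
  refine AP_2255_false (W := Localization.AtPrime (Ideal.span {α})) hα hK (algebraMap _ ℝ)
    (x₁ := x₁) (x₂ := x₂) (c := c) (d := e)
    (Int.isCoprime_iff_gcd_eq_one.2 hgcd) ?_ (by linarith) (by linarith)
  rintro rfl
  exact hd (by linarith)
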